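/- arXiv:0710.1283 — 2 statements merged into one kernel-verified Lean document; each statement's English description precedes it below -/
import Mathlib

section
/- Fix an integer N ≥ 1 and positive integers c_0, …, c_{N−1}. Let E ⊆ D be the set of (x,y) ∈ D with ⌊1/y⌋ = c_0 and whose first N−1 partial quotients of x satisfy a_i(x) = c_i for 1 ≤ i ≤ N−1. Then for all reals 1 < a < b, the limit as R → ∞ of μ1{ α ∈ (0,1) irrational : a < q_{n_R(α)}(α)/R < b and a_{n_R(α)−k}(α) = c_k for all 0 ≤ k < N } exists and equals (∫_D φ dμ2)^{−1} · ∫_E ( max(0, φ(x,y) − ln a) − max(0, φ(x,y) − ln b) ) dμ2(x,y). -/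
open MeasureTheory Filter Set Topology

noncomputable section

/-- The Gauss map `x ↦ {1/x}`. -/
def gaussMap (x : ℝ) : ℝ := Int.fract (1 / x)

/-- The `n`-th partial quotient (1-indexed) of the continued fraction expansion of `α`:
`pq α n = ⌊1 / 𝒢^{n-1} α⌋`. -/
def pq (α : ℝ) (n : ℕ) : ℕ := ⌊1 / gaussMap^[n - 1] α⌋₊

/-- Denominators of the convergents attached to a (1-indexed) sequence of partial quotients:
`q 0 = 1`, `q 1 = b 1`, `q (n+2) = b (n+2) * q (n+1) + q n`. -/
def qden (b : ℕ → ℕ) : ℕ → ℕ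
  | 0 => 1
  | 1 => b 1
  | n + 2 => b (n + 2) * qden b (n + 1) + qden b n

/-- Numerators of the convergents attached to a (1-indexed) sequence of partial quotients:
`p 0 = 0`, `p 1 = 1`, `p (n+2) = b (n+2) * p (n+1) + p n`. -/
def pnum (b : ℕ → ℕ) : ℕ → ℕ
  | 0 => 0
  | 1 => 1
  | n + 2 => b (n + 2) * pnum b (n + 1) + pnum b n

/-- `n_R(α)`: the first index `n` with `q_n(α) > R`. -/
def nIndex (α : ℝ) (R : ℝ) : ℕ := sInf {n : ℕ | R < (qden (pq α) n : ℝ)}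

/-- The Gauss measure on `(0,1)`, with density `1 / (ln 2 · (1 + x))`. -/
def gaussMeasure : Measure ℝ :=
  (volume.restrict (Ioo (0 : ℝ) 1)).withDensity fun x =>
    ENNReal.ofReal (1 / (Real.log 2 * (1 + x)))

/-- The domain `D = ((0,1) ∖ ℚ) × ((0,1) ∖ ℚ)` of the natural extension of the Gauss map. -/
def Dset : Set (ℝ × ℝ) :=
  {p | p.1 ∈ Ioo (0 : ℝ) 1 ∧ Irrational p.1 ∧ p.2 ∈ Ioo (0 : ℝ) 1 ∧ Irrational p.2}

/-- The invariant measure `μ₂` on `D`, with density `1 / (ln 2 · (1 + x y)²)`. -/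
def mu2 : Measure (ℝ × ℝ) :=
  (volume.restrict Dset).withDensity fun p =>
    ENNReal.ofReal (1 / (Real.log 2 * (1 + p.1 * p.2) ^ 2))

/-- The roof function `φ(x, y) = ln (⌊1/y⌋ + x)`. -/
def roof (p : ℝ × ℝ) : ℝ := Real.log ((⌊1 / p.2⌋ : ℝ) + p.1)

/-- The natural extension of the Gauss map,
`Ĝ(x, y) = (1 / (⌊1/y⌋ + x), 1/y − ⌊1/y⌋)`. -/
def GhatMap (p : ℝ × ℝ) : ℝ × ℝ := (1 / ((⌊1 / p.2⌋ : ℝ) + p.1), Int.fract (1 / p.2))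

/-- Birkhoff sums `S_r φ(p) = ∑_{i<r} φ(Ĝ^i p)` of the roof function under `Ĝ`. -/
def birk (p : ℝ × ℝ) (r : ℕ) : ℝ := ∑ i ∈ Finset.range r, roof (GhatMap^[i] p)

/-- `r(p, T)`: the first `r` with `S_r φ(p) > T`. -/
def rTime (p : ℝ × ℝ) (T : ℝ) : ℕ := sInf {r : ℕ | T < birk p r}

/-- Value of a finite continued fraction `[b₁, b₂, …, bₘ] = 1/(b₁ + 1/(b₂ + ⋯ + 1/bₘ))`,
entries given as a list. -/
def cfList : List ℝ → ℝ
  | [] => 0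
  | b :: t => 1 / (b + cfList t)

/-- The `m`-th truncation `[b 1, b 2, …, b m]` of an infinite continued fraction. -/
def cfTrunc (b : ℕ → ℝ) (m : ℕ) : ℝ := cfList ((List.range m).map fun i => b (i + 1))

/-- Value of the infinite continued fraction `[b 1, b 2, …]`, i.e. the limit of its finite
truncations. -/
def cfVal (b : ℕ → ℝ) : ℝ := limUnder atTop fun m => cfTrunc b m

/-- The finite continued fraction on the reversed word,
`cfRev b k = [b k; b (k-1), …, b 1] = b k + 1/(b (k-1) + ⋯ + 1/(b 1))`. -/
def cfRev (b : ℕ → ℝ) (k : ℕ) : ℝ :=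
  b k + cfList ((List.range (k - 1)).map fun i => b (k - 1 - i))

/-- For a bi-infinite sequence `a : ℤ → ℕ` of partial quotients,
`fn a n = ln q_n − ∑_{k=1}^n ln [a_k; a_{k-1}, a_{k-2}, …]`. -/
def fn (a : ℤ → ℕ) (n : ℕ) : ℝ :=
  Real.log (qden (fun k => a (k : ℤ)) n : ℝ) -
    ∑ k ∈ Finset.Icc 1 n,
      Real.log ((a (k : ℤ) : ℝ) + cfVal fun j => (a ((k : ℤ) - (j : ℤ)) : ℝ))

/-- The bi-sided cylinder of length `n` in `D` prescribing the sequence coordinates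
`a_k = b k` for `−n ≤ k ≤ n` (where `a_k`, `k ≥ 1`, are the partial quotients of the second
coordinate and `a_{−j}`, `j ≥ 0`, are the partial quotients of the first coordinate). -/
def cylinder (n : ℕ) (b : ℤ → ℕ) : Set (ℝ × ℝ) :=
  {p ∈ Dset | (∀ k : ℕ, 1 ≤ k → k ≤ n → pq p.2 k = b (k : ℤ)) ∧
    ∀ j : ℕ, j ≤ n → pq p.1 (j + 1) = b (-(j : ℤ))}

/-- The phase space of the special flow over `Ĝ` with roof function `φ`. -/
def DPhi : Set ((ℝ × ℝ) × ℝ) := {q | q.1 ∈ Dset ∧ 0 ≤ q.2 ∧ q.2 < roof q.1}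

/-- The invariant probability measure `μ₃` of the special flow. -/
def mu3 : Measure ((ℝ × ℝ) × ℝ) :=
  (ENNReal.ofReal (∫ p, roof p ∂mu2))⁻¹ • ((mu2.prod volume).restrict DPhi)

/-- The special flow `Φ_t` (for `t ≥ 0`) built over `Ĝ` with roof function `φ`:
`Φ_t(p, s) = (Ĝ^{r-1} p, s + t − S_{r-1} φ(p))` where `r = r(p, s + t)`. -/
def flowMap (t : ℝ) (q : (ℝ × ℝ) × ℝ) : (ℝ × ℝ) × ℝ :=
  (GhatMap^[rTime q.1 (q.2 + t) - 1] q.1,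
    q.2 + t - birk q.1 (rTime q.1 (q.2 + t) - 1))

end

/-!
For irrational `α`, the event that `n` is the first convergent denominator exceeding `R` and that
`x` is the denominator before it means, up to the reflection `α ↦ 1 - α`, that `α` lies in an
explicit interval of length `1 / (n (n + x))` ending at `w / n`, where `w` is the inverse of `x`
modulo `n`; here `x ≤ R < n` and `x` is coprime to `n`. The digits `a_{n_R}, a_{n_R - 1}, …` are
the leading partial quotients of `x / n`, apart from a set of `α` whose measure tends to `0`.

An elementary fourth-moment bound for Kloosterman sums makes the points `(x / n, w / n)`
equidistributed in the unit square, so the Gauss measure of the event for given `n` is asymptotic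
to `φ(n) / n²` times an integral depending only on `R / n`. Summing over `a R < n < b R`, with the
totients replaced by their mean density `6 / π²`, gives the limit
`(12 log 2 / π²) ∫ v in a..b, μ₁ (C ∩ (0, 1 / v]) / v`, `C` being the set of numbers with the
prescribed digits. Finally, the first coordinate of `Ĝ` has law `μ₁` under `μ₂` and equals
`exp (-φ)`, which turns this into the integral over `E`; the constant is the inverse of the mean
`∫ φ dμ₂ = π² / (12 log 2)`.
-/

section DivisorBound

lemma add_one_pow_le_pow_self_mul_two_pow (k e : ℕ) : (e + 1) ^ k ≤ k ^ k * 2 ^ e := by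
  rcases k.eq_zero_or_pos with rfl | hk
  · simpa using Nat.one_le_two_pow
  have hbase : e + 1 ≤ k * 2 ^ (e / k) := by
    calc e + 1 ≤ k * (e / k + 1) := Nat.lt_mul_div_succ e hk
      _ ≤ k * 2 ^ (e / k) := Nat.mul_le_mul_left k Nat.lt_two_pow_self
  calc (e + 1) ^ k ≤ (k * 2 ^ (e / k)) ^ k := Nat.pow_le_pow_left hbase k
    _ = k ^ k * 2 ^ (e / k * k) := by rw [mul_pow, ← pow_mul]
    _ ≤ k ^ k * 2 ^ e := by gcongr; exacts [one_le_two, Nat.div_mul_le_self e k]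

-- Primes `p ≥ 2 ^ k` satisfy `(e + 1) ^ k ≤ p ^ e`; each smaller prime costs a factor `k ^ k`.
lemma exists_card_divisors_pow_le (k : ℕ) :
    ∃ C : ℕ, ∀ n : ℕ, n ≠ 0 → n.divisors.card ^ k ≤ C * n := by
  refine ⟨(max 1 (k ^ k)) ^ 2 ^ k, fun n hn => ?_⟩
  have hlocal : ∀ p ∈ n.primeFactors, (n.factorization p + 1) ^ k ≤
      (if p < 2 ^ k then max 1 (k ^ k) else 1) * p ^ n.factorization p := by
    intro p hp
    have hp2 : 2 ≤ p := (Nat.prime_of_mem_primeFactors hp).two_le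
    split_ifs with h
    · exact (add_one_pow_le_pow_self_mul_two_pow _ _).trans (by gcongr; exact le_max_right _ _)
    · calc (n.factorization p + 1) ^ k ≤ (2 ^ n.factorization p) ^ k :=
            Nat.pow_le_pow_left Nat.lt_two_pow_self k
        _ = (2 ^ k) ^ n.factorization p := pow_right_comm _ _ _
        _ ≤ 1 * p ^ n.factorization p := by rw [one_mul]; gcongr; omega
  have hsmall : (n.primeFactors.filter (· < 2 ^ k)).card ≤ 2 ^ k := by
    calc _ ≤ (Finset.range (2 ^ k)).card :=
          Finset.card_le_card fun p hp => Finset.mem_range.2 (Finset.mem_filter.1 hp).2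
      _ = 2 ^ k := Finset.card_range _
  calc n.divisors.card ^ k = ∏ p ∈ n.primeFactors, (n.factorization p + 1) ^ k := by
        rw [Nat.card_divisors hn, Finset.prod_pow]
    _ ≤ ∏ p ∈ n.primeFactors,
          (if p < 2 ^ k then max 1 (k ^ k) else 1) * p ^ n.factorization p :=
        Finset.prod_le_prod' hlocal
    _ = max 1 (k ^ k) ^ (n.primeFactors.filter (· < 2 ^ k)).card * n := by
        rw [Finset.prod_mul_distrib, ← Finset.prod_filter, Finset.prod_const]
        congr 1
        exact Nat.prod_factorization_pow_eq_self hn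
    _ ≤ max 1 (k ^ k) ^ 2 ^ k * n := by gcongr; exact le_max_left _ _

lemma tendsto_card_divisors_pow_div (k : ℕ) :
    Tendsto (fun n : ℕ => (n.divisors.card : ℝ) ^ k / n) atTop (𝓝 0) := by
  obtain ⟨C, hC⟩ := exists_card_divisors_pow_le (k * 2)
  have hsq : Tendsto (fun n : ℕ => ((n.divisors.card : ℝ) ^ k / n) ^ 2) atTop (𝓝 0) := by
    refine squeeze_zero' (Eventually.of_forall fun n => sq_nonneg _) ?_
      (tendsto_const_div_atTop_nhds_zero_nat (C : ℝ))
    filter_upwards [eventually_ne_atTop 0] with n hn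
    have hn' : (0 : ℝ) < n := Nat.cast_pos.2 (Nat.pos_of_ne_zero hn)
    have h : (n.divisors.card : ℝ) ^ (k * 2) ≤ C * n := mod_cast hC n hn
    rw [div_pow, ← pow_mul, div_le_div_iff₀ (pow_pos hn' 2) hn']
    nlinarith
  exact (Asymptotics.isLittleO_one_iff ℝ).1
    (.of_pow (n := 2) (by simpa [Pi.pow_def, Asymptotics.isLittleO_one_iff] using hsq) two_ne_zero)

lemma le_card_divisors_mul_totient (n : ℕ) : n ≤ n.divisors.card * n.totient := by
  rcases n.eq_zero_or_pos with rfl | hn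
  · exact Nat.zero_le _
  calc n = ∑ d ∈ n.divisors, d.totient := (Nat.sum_totient n).symm
    _ ≤ n.divisors.card * n.totient := Finset.sum_le_card_nsmul _ _ _ fun d hd =>
        Nat.le_of_dvd (Nat.totient_pos.2 hn)
          (Nat.totient_dvd_of_dvd (Nat.dvd_of_mem_divisors hd))

end DivisorBound

section ZeroProducts

lemma card_filter_zsmul_eq_le {G : Type*} [AddGroup G] [IsAddCyclic G] [Fintype G] [DecidableEq G]
    {h : ℤ} (hh : h ≠ 0) (c : G) :
    (Finset.univ.filter fun v : G => h • v = c).card ≤ h.natAbs := by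
  let _ : AddCommGroup G := IsAddCyclic.addCommGroup
  rcases (Finset.univ.filter fun v : G => h • v = c).eq_empty_or_nonempty with hemp | ⟨v₀, hv₀⟩
  · simp [hemp]
  refine le_trans (Finset.card_le_card_of_injOn (· - v₀) (fun v hv => ?_)
    fun v _ w _ hvw => sub_left_injective hvw)
    (IsAddCyclic.card_nsmul_eq_zero_le (α := G) (Int.natAbs_pos.2 hh))
  simp only [Finset.coe_filter, Finset.mem_filter, Finset.mem_univ, true_and, mem_ofPred_eq]
    at hv hv₀ ⊢
  rw [natAbs_nsmul_eq_zero, smul_sub, hv, hv₀, sub_self]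

variable (n : ℕ) [NeZero n]

lemma card_filter_mul_eq_zero_le (m : ZMod n) :
    (Finset.univ.filter fun c : ZMod n => m * c = 0).card ≤ Nat.gcd m.val n := by
  have hg : (Nat.gcd m.val n : ℤ) ≠ 0 := mod_cast Nat.gcd_ne_zero_right (NeZero.ne n)
  refine (Finset.card_le_card fun c hc => ?_).trans (card_filter_zsmul_eq_le hg (0 : ZMod n))
  have hbezout : ((Nat.gcd m.val n : ℤ) : ZMod n) = m * (m.val.gcdA n : ZMod n) := by
    simp [Nat.gcd_eq_gcd_ab]
  simp only [Finset.mem_filter, Finset.mem_univ, true_and] at hc ⊢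
  rw [zsmul_eq_mul, hbezout, mul_right_comm, hc, zero_mul]

lemma card_filter_dvd_val_le {d : ℕ} (hd : d ∣ n) :
    (Finset.univ.filter fun a : ZMod n => d ∣ a.val).card ≤ n / d := by
  calc _ ≤ (Finset.range (n / d)).card := by
        refine Finset.card_le_card_of_injOn (fun a => a.val / d) (fun a _ => ?_)
          fun a ha b hb hab => ?_
        · exact Finset.mem_coe.2 (Finset.mem_range.2
            (Nat.div_lt_div_of_lt_of_dvd hd (ZMod.val_lt a)))
        · simp only [Finset.coe_filter, Finset.mem_univ, true_and, mem_ofPred_eq] at ha hb hab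
          exact ZMod.val_injective n
            (by rw [← Nat.div_mul_cancel ha, ← Nat.div_mul_cancel hb, hab])
    _ = n / d := Finset.card_range _

lemma sum_gcd_val_le : ∑ a : ZMod n, Nat.gcd a.val n ≤ n * n.divisors.card := by
  have hgcd : ∀ a : ZMod n, Nat.gcd a.val n ≤ ∑ d ∈ n.divisors, if d ∣ a.val then d else 0 := by
    intro a
    have hmem : Nat.gcd a.val n ∈ n.divisors := by simp [Nat.gcd_dvd_right, NeZero.ne n]
    refine le_of_eq_of_le ?_ (Finset.single_le_sum
      (f := fun d => if d ∣ a.val then d else 0) (fun _ _ => Nat.zero_le _) hmem)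
    simp [Nat.gcd_dvd_left]
  calc ∑ a : ZMod n, Nat.gcd a.val n
      ≤ ∑ a : ZMod n, ∑ d ∈ n.divisors, (if d ∣ a.val then d else 0) :=
        Finset.sum_le_sum fun a _ => hgcd a
    _ = ∑ d ∈ n.divisors, (Finset.univ.filter fun a : ZMod n => d ∣ a.val).card * d := by
        rw [Finset.sum_comm]
        exact Finset.sum_congr rfl fun d _ => by
          rw [← Finset.sum_filter, Finset.sum_const, smul_eq_mul]
    _ ≤ ∑ _d ∈ n.divisors, n := Finset.sum_le_sum fun d hd => by
        have hdn := Nat.dvd_of_mem_divisors hd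
        exact (Nat.mul_le_mul_right d (card_filter_dvd_val_le n hdn)).trans
          (Nat.div_mul_le_self n d)
    _ = n * n.divisors.card := by rw [Finset.sum_const, smul_eq_mul, mul_comm]

lemma card_filter_mul_mul_eq_zero_le :
    (Finset.univ.filter fun t : ZMod n × ZMod n × ZMod n => t.1 * t.2.1 * t.2.2 = 0).card
      ≤ n ^ 2 * n.divisors.card ^ 2 := by
  have hgcd_pos (a : ZMod n) : 0 < Nat.gcd a.val n := Nat.gcd_pos_of_pos_right _ (NeZero.pos n)
  have hgcd_mul (a b : ZMod n) :
      Nat.gcd (a * b).val n ≤ Nat.gcd a.val n * Nat.gcd b.val n := by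
    rw [ZMod.val_mul, ← Nat.gcd_rec, Nat.gcd_comm a.val, Nat.gcd_comm b.val]
    have hpos : 0 < n.gcd a.val * n.gcd b.val := by
      simpa only [Nat.gcd_comm n] using Nat.mul_pos (hgcd_pos a) (hgcd_pos b)
    exact Nat.le_of_dvd hpos (Nat.gcd_mul_right_dvd_mul_gcd _ _ _)
  calc _ = ∑ a : ZMod n, ∑ b : ZMod n,
          (Finset.univ.filter fun c : ZMod n => a * b * c = 0).card := by
        simp_rw [Finset.card_filter, Fintype.sum_prod_type]
    _ ≤ ∑ a : ZMod n, ∑ b : ZMod n, Nat.gcd a.val n * Nat.gcd b.val n :=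
        Finset.sum_le_sum fun a _ => Finset.sum_le_sum fun b _ =>
          (card_filter_mul_eq_zero_le n (a * b)).trans (hgcd_mul a b)
    _ = (∑ a : ZMod n, Nat.gcd a.val n) ^ 2 := by rw [sq, Finset.sum_mul_sum]
    _ ≤ (n * n.divisors.card) ^ 2 := Nat.pow_le_pow_left (sum_gcd_val_le n) 2
    _ = n ^ 2 * n.divisors.card ^ 2 := mul_pow _ _ _

end ZeroProducts

section Kloosterman

variable (n : ℕ) [NeZero n]

lemma sum_norm_sq_sum_stdAddChar {P : Type*} [Fintype P] (A B : P → ZMod n) :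
    ∑ r : ZMod n, ∑ s : ZMod n, ‖∑ p, ZMod.stdAddChar (r * A p + s * B p)‖ ^ 2 =
      (n : ℝ) ^ 2 *
        ((Finset.univ.filter fun t : P × P => A t.1 = A t.2 ∧ B t.1 = B t.2).card : ℝ) := by
  have hexpand : ∀ r s : ZMod n, ((‖∑ p, ZMod.stdAddChar (r * A p + s * B p)‖ : ℂ)) ^ 2 =
      ∑ t : P × P, ZMod.stdAddChar (r * (A t.1 - A t.2)) *
        ZMod.stdAddChar (s * (B t.1 - B t.2)) := by
    intro r s
    rw [← Complex.mul_conj', map_sum, Finset.sum_mul_sum, Fintype.sum_prod_type]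
    refine Finset.sum_congr rfl fun p _ => Finset.sum_congr rfl fun p' _ => ?_
    rw [← AddChar.map_neg_eq_conj, ← AddChar.map_add_eq_mul, ← AddChar.map_add_eq_mul]
    congr 1
    ring
  have hswap : ∀ r : ZMod n,
      ∑ s : ZMod n, ∑ t : P × P, ZMod.stdAddChar (r * (A t.1 - A t.2)) *
        (ZMod.stdAddChar (s * (B t.1 - B t.2)) : ℂ) =
      ∑ t : P × P, ZMod.stdAddChar (r * (A t.1 - A t.2)) *
        ∑ s : ZMod n, (ZMod.stdAddChar (s * (B t.1 - B t.2)) : ℂ) := by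
    intro r
    rw [Finset.sum_comm]
    simp_rw [Finset.mul_sum]
  rw [← Complex.ofReal_inj]
  push_cast
  simp_rw [hexpand, hswap]
  rw [Finset.sum_comm]
  simp_rw [← Finset.sum_mul, AddChar.sum_mulShift _ (ZMod.isPrimitive_stdAddChar n), ZMod.card]
  rw [Finset.card_filter]
  push_cast
  rw [Finset.mul_sum]
  refine Finset.sum_congr rfl fun t _ => ?_
  by_cases ha : A t.1 = A t.2 <;> by_cases hb : B t.1 = B t.2 <;>
    simp [ha, hb, sub_eq_zero, sq]

/-- The Kloosterman sum `K(r, s; n) = ∑ e((r u + s u⁻¹) / n)` over the units `u` modulo `n`. -/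
noncomputable def kloostermanSum (r s : ZMod n) : ℂ :=
  ∑ u : (ZMod n)ˣ, ZMod.stdAddChar (r * (u : ZMod n) + s * (↑u⁻¹ : ZMod n))

variable {n} in
lemma kloostermanSum_sq (r s : ZMod n) :
    kloostermanSum n r s ^ 2 = ∑ p : (ZMod n)ˣ × (ZMod n)ˣ,
      ZMod.stdAddChar (r * ((p.1 : ZMod n) + (p.2 : ZMod n)) +
        s * ((↑p.1⁻¹ : ZMod n) + (↑p.2⁻¹ : ZMod n))) := by
  rw [kloostermanSum, sq, Finset.sum_mul_sum, Fintype.sum_prod_type]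
  refine Finset.sum_congr rfl fun p _ => Finset.sum_congr rfl fun p' _ => ?_
  rw [← AddChar.map_add_eq_mul]
  congr 1
  ring

-- If `a + b = c + d` and `a⁻¹ + b⁻¹ = c⁻¹ + d⁻¹` then `(a + b) (c - a) (c - b) = 0`.
lemma mul_sub_mul_sub_eq_zero_of_add_eq_of_inv_add_eq {R : Type*} [CommRing R] {a b c d : Rˣ}
    (hsum : (a + b : R) = c + d)
    (hinv : (↑a⁻¹ + ↑b⁻¹ : R) = ↑c⁻¹ + ↑d⁻¹) :
    (a + b : R) * (c - a) * (c - b) = 0 := by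
  have hcross : ((a : R) + b) * c * d = ((c : R) + d) * a * b := by
    linear_combination ((a : R) * b * c * d) * hinv - ((a : R) * c * d) * b.mul_inv
      - ((b : R) * c * d) * a.mul_inv + ((a : R) * b * d) * c.mul_inv
      + ((a : R) * b * c) * d.mul_inv
  linear_combination -hcross + ((a : R) * b - ((a : R) + b) * c) * hsum

lemma card_filter_add_eq_and_inv_add_eq_le :
    (Finset.univ.filter fun t : ((ZMod n)ˣ × (ZMod n)ˣ) × ((ZMod n)ˣ × (ZMod n)ˣ) =>
      (t.1.1 + t.1.2 : ZMod n) = t.2.1 + t.2.2 ∧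
      (↑t.1.1⁻¹ + ↑t.1.2⁻¹ : ZMod n) = ↑t.2.1⁻¹ + ↑t.2.2⁻¹).card
      ≤ 2 * (n ^ 2 * n.divisors.card ^ 2) := by
  let f : ((ZMod n)ˣ × (ZMod n)ˣ) × ((ZMod n)ˣ × (ZMod n)ˣ) → ZMod n × ZMod n × ZMod n :=
    fun t => (t.1.1 + t.1.2, t.2.1 - t.1.1, t.2.1 - t.1.2)
  refine le_trans ?_ (Nat.mul_le_mul_left 2 (card_filter_mul_mul_eq_zero_le n))
  refine Finset.card_le_mul_card_image_of_maps_to (f := f) (fun t ht => ?_) 2 ?_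
  · rw [Finset.mem_filter] at ht ⊢
    exact ⟨Finset.mem_univ _, mul_sub_mul_sub_eq_zero_of_add_eq_of_inv_add_eq ht.2.1 ht.2.2⟩
  -- On a fibre of `f`, `2 c` is determined, and `c` determines the quadruple.
  rintro ⟨x, y, z⟩ _
  refine le_trans (Finset.card_le_card_of_injOn (fun t => (t.2.1 : ZMod n)) ?_ ?_)
    (card_filter_zsmul_eq_le (h := 2) two_ne_zero (x + y + z))
  · rintro ⟨⟨a, b⟩, ⟨c, d⟩⟩ h
    simp only [Finset.coe_filter, Finset.mem_filter, Finset.mem_univ, true_and, mem_ofPred_eq,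
      Prod.mk.injEq, f, zsmul_eq_mul, Int.cast_ofNat] at h ⊢
    obtain ⟨-, hx, hy, hz⟩ := h
    linear_combination hx + hy + hz
  · rintro ⟨⟨a, b⟩, ⟨c, d⟩⟩ h ⟨⟨a', b'⟩, ⟨c', d'⟩⟩ h' hc
    simp only [Finset.coe_filter, Finset.mem_filter, Finset.mem_univ, true_and, mem_ofPred_eq,
      Prod.mk.injEq, f] at h h' hc ⊢
    obtain ⟨⟨hs, -⟩, -, hy, hz⟩ := h
    obtain ⟨⟨hs', -⟩, -, hy', hz'⟩ := h'
    have ha : (a : ZMod n) = a' := by linear_combination hc - hy + hy'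
    have hb : (b : ZMod n) = b' := by linear_combination hc - hz + hz'
    have hd : (d : ZMod n) = d' := by linear_combination -hs + hs' - hc + ha + hb
    exact ⟨⟨Units.ext ha, Units.ext hb⟩, Units.ext hc, Units.ext hd⟩

lemma sum_norm_kloostermanSum_pow_four_le :
    ∑ r : ZMod n, ∑ s : ZMod n, ‖kloostermanSum n r s‖ ^ 4 ≤
      2 * (n : ℝ) ^ 4 * (n.divisors.card : ℝ) ^ 2 := by
  have hparseval := sum_norm_sq_sum_stdAddChar n (P := (ZMod n)ˣ × (ZMod n)ˣ)
    (fun p => p.1 + p.2) (fun p => ↑p.1⁻¹ + ↑p.2⁻¹)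
  have hcount : ((Finset.univ.filter fun t : ((ZMod n)ˣ × (ZMod n)ˣ) × ((ZMod n)ˣ × (ZMod n)ˣ) =>
      (t.1.1 + t.1.2 : ZMod n) = t.2.1 + t.2.2 ∧
      (↑t.1.1⁻¹ + ↑t.1.2⁻¹ : ZMod n) = ↑t.2.1⁻¹ + ↑t.2.2⁻¹).card : ℝ)
      ≤ 2 * ((n : ℝ) ^ 2 * (n.divisors.card : ℝ) ^ 2) :=
    mod_cast card_filter_add_eq_and_inv_add_eq_le n
  calc ∑ r : ZMod n, ∑ s : ZMod n, ‖kloostermanSum n r s‖ ^ 4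
      = ∑ r : ZMod n, ∑ s : ZMod n, ‖kloostermanSum n r s ^ 2‖ ^ 2 := by
        simp_rw [norm_pow, ← pow_mul]
    _ ≤ (n : ℝ) ^ 2 * (2 * ((n : ℝ) ^ 2 * (n.divisors.card : ℝ) ^ 2)) := by
        simp_rw [kloostermanSum_sq, hparseval]
        gcongr
    _ = 2 * (n : ℝ) ^ 4 * (n.divisors.card : ℝ) ^ 2 := by ring

variable {n}

lemma kloostermanSum_mul_mul_inv (r s : ZMod n) (v : (ZMod n)ˣ) :
    kloostermanSum n (r * v) (s * (↑v⁻¹ : ZMod n)) = kloostermanSum n r s := by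
  rw [kloostermanSum, kloostermanSum, ← Equiv.sum_comp (Equiv.mulLeft v) (fun u : (ZMod n)ˣ =>
    (ZMod.stdAddChar (r * (u : ZMod n) + s * (↑u⁻¹ : ZMod n)) : ℂ))]
  refine Finset.sum_congr rfl fun u _ => congrArg _ ?_
  simp only [Equiv.coe_mulLeft, mul_inv, Units.val_mul]
  ring

lemma kloostermanSum_comm (r s : ZMod n) : kloostermanSum n r s = kloostermanSum n s r := by
  rw [kloostermanSum, kloostermanSum, ← Equiv.sum_comp (Equiv.inv (ZMod n)ˣ)
    (fun u : (ZMod n)ˣ => (ZMod.stdAddChar (r * (u : ZMod n) + s * (↑u⁻¹ : ZMod n)) : ℂ))]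
  refine Finset.sum_congr rfl fun u _ => congrArg _ ?_
  simp only [Equiv.inv_apply, inv_inv]
  ring

variable (n) in
-- Each value `K(h v, k v⁻¹; n) = K(h, k; n)` occurs `φ(n)` times in the fourth moment, up to
-- the multiplicity `|h|` of `v ↦ h v`.
lemma totient_mul_norm_kloostermanSum_pow_four_le {h : ℤ} (hh : h ≠ 0) (k : ℤ) :
    (n.totient : ℝ) * ‖kloostermanSum n h k‖ ^ 4 ≤
      h.natAbs * (2 * (n : ℝ) ^ 4 * (n.divisors.card : ℝ) ^ 2) := by
  let f : (ZMod n)ˣ → ZMod n × ZMod n := fun v => (h * v, k * (↑v⁻¹ : ZMod n))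
  have hfiber (t : ZMod n × ZMod n) : (Finset.univ.filter (f · = t)).card ≤ h.natAbs := by
    refine (Finset.card_le_card_of_injOn (fun v : (ZMod n)ˣ => (v : ZMod n))
      (fun v hv => ?_)
      fun v _ w _ hvw => Units.ext hvw).trans (card_filter_zsmul_eq_le hh t.1)
    have hv : f v = t := (Finset.mem_filter.1 hv).2
    simp [← hv, f]
  calc (n.totient : ℝ) * ‖kloostermanSum n h k‖ ^ 4
      = ∑ v : (ZMod n)ˣ, ‖kloostermanSum n (f v).1 (f v).2‖ ^ 4 := by
        simp [f, kloostermanSum_mul_mul_inv, ZMod.card_units_eq_totient]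
    _ = ∑ t : ZMod n × ZMod n,
          (Finset.univ.filter (f · = t)).card * ‖kloostermanSum n t.1 t.2‖ ^ 4 := by
        rw [← Finset.sum_fiberwise Finset.univ f]
        refine Finset.sum_congr rfl fun t _ => ?_
        rw [Finset.sum_congr rfl fun v hv => by rw [(Finset.mem_filter.1 hv).2],
          Finset.sum_const, nsmul_eq_mul]
    _ ≤ ∑ t : ZMod n × ZMod n, (h.natAbs : ℝ) * ‖kloostermanSum n t.1 t.2‖ ^ 4 := by
        gcongr with t
        exact hfiber t
    _ ≤ h.natAbs * (2 * (n : ℝ) ^ 4 * (n.divisors.card : ℝ) ^ 2) := by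
        rw [← Finset.mul_sum, Fintype.sum_prod_type]
        gcongr
        exact sum_norm_kloostermanSum_pow_four_le n

variable (n) in
lemma norm_kloostermanSum_div_totient_pow_four_le {h : ℤ} (hh : h ≠ 0) (k : ℤ) :
    (‖kloostermanSum n h k‖ / n.totient) ^ 4 ≤
      2 * h.natAbs * ((n.divisors.card : ℝ) ^ 7 / n) := by
  have hmoment := totient_mul_norm_kloostermanSum_pow_four_le n hh k
  have hn : (0 : ℝ) < n := Nat.cast_pos.2 (NeZero.pos n)
  have ht : (0 : ℝ) < n.totient := Nat.cast_pos.2 (Nat.totient_pos.2 (NeZero.pos n))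
  have htot : (n : ℝ) ^ 5 ≤ ((n.divisors.card : ℝ) * n.totient) ^ 5 := by
    gcongr
    exact mod_cast le_card_divisors_mul_totient n
  rw [div_pow, ← mul_div_assoc, div_le_div_iff₀ (pow_pos ht 4) hn]
  refine le_of_mul_le_mul_right ?_ (mul_pos ht (pow_pos hn 4))
  calc ‖kloostermanSum n h k‖ ^ 4 * n * (n.totient * (n : ℝ) ^ 4)
      = (n.totient * ‖kloostermanSum n h k‖ ^ 4) * (n : ℝ) ^ 5 := by ring
    _ ≤ (h.natAbs * (2 * (n : ℝ) ^ 4 * (n.divisors.card : ℝ) ^ 2)) *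
          ((n.divisors.card : ℝ) * n.totient) ^ 5 := by gcongr
    _ = 2 * h.natAbs * (n.divisors.card : ℝ) ^ 7 * n.totient ^ 4 * (n.totient * (n : ℝ) ^ 4) := by
        ring

lemma tendsto_kloostermanSum_div_totient {h k : ℤ} (hhk : (h, k) ≠ 0) :
    Tendsto (fun n : ℕ => kloostermanSum (n + 1) h k / ((n + 1).totient : ℂ)) atTop (𝓝 0) := by
  wlog hh : h ≠ 0 generalizing h k
  · have hkh : (k, h) ≠ 0 := fun h0 => hhk (by simpa [Prod.ext_iff, and_comm] using h0)
    exact (this hkh fun hk => hkh (by simp [hk, not_not.1 hh])).congr fun n => by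
      rw [kloostermanSum_comm]
  have hbound : Tendsto (fun n : ℕ => 2 * (h.natAbs : ℝ) *
      (((n + 1).divisors.card : ℝ) ^ 7 / (n + 1 : ℕ))) atTop (𝓝 0) := by
    simpa using ((tendsto_card_divisors_pow_div 7).comp (tendsto_add_atTop_nat 1)).const_mul
      (2 * (h.natAbs : ℝ))
  have hpow : Tendsto (fun n : ℕ =>
      (‖kloostermanSum (n + 1) h k‖ / ((n + 1).totient : ℝ)) ^ 4) atTop (𝓝 0) :=
    squeeze_zero (fun n => by positivity)
      (fun n => norm_kloostermanSum_div_totient_pow_four_le (n + 1) hh k) hbound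
  rw [tendsto_zero_iff_norm_tendsto_zero]
  simp_rw [norm_div, Complex.norm_natCast]
  exact (Asymptotics.isLittleO_one_iff ℝ).1
    (.of_pow (n := 4) (by simpa [Pi.pow_def, Asymptotics.isLittleO_one_iff] using hpow)
      four_ne_zero)

end Kloosterman

section WeakConvergence

variable {ι : Type*} {l : Filter ι}

lemma tendsto_probabilityMeasure_of_span_closure_eq_top {X : Type*} [TopologicalSpace X]
    [CompactSpace X] [MeasurableSpace X] [OpensMeasurableSpace X] {μ : ι → ProbabilityMeasure X}
    {ν : ProbabilityMeasure X} {s : Set C(X, ℂ)}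
    (hs : (Submodule.span ℂ s).topologicalClosure = ⊤)
    (h : ∀ f ∈ s, Tendsto (fun i => ∫ x, f x ∂(μ i : Measure X)) l
      (𝓝 (∫ x, f x ∂(ν : Measure X)))) :
    Tendsto μ l (𝓝 ν) := by
  have hinteg (P : ProbabilityMeasure X) (f : C(X, ℂ)) : Integrable f (P : Measure X) :=
    f.continuous.integrable_of_hasCompactSupport (HasCompactSupport.of_compactSpace _)
  have hlip (P : ProbabilityMeasure X) :
      LipschitzWith 1 fun f : C(X, ℂ) => ∫ x, f x ∂(P : Measure X) :=
    LipschitzWith.of_dist_le_mul fun f g => by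
      rw [dist_eq_norm, ← integral_sub (hinteg P f) (hinteg P g), dist_eq_norm, NNReal.coe_one,
        one_mul]
      simpa using norm_integral_le_of_norm_le_const
        (ae_of_all (P : Measure X) fun x => (f - g).norm_coe_le_norm x)
  have hclosed : IsClosed {f : C(X, ℂ) | Tendsto (fun i => ∫ x, f x ∂(μ i : Measure X)) l
      (𝓝 (∫ x, f x ∂(ν : Measure X)))} :=
    (LipschitzWith.uniformEquicontinuous _ 1 fun i => hlip (μ i)).equicontinuous
      |>.isClosed_setOfPred_tendsto (hlip ν).continuous
  have hspan : (Submodule.span ℂ s : Set C(X, ℂ)) ⊆ {f : C(X, ℂ) |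
      Tendsto (fun i => ∫ x, f x ∂(μ i : Measure X)) l (𝓝 (∫ x, f x ∂(ν : Measure X)))} := by
    intro f hf
    rw [mem_ofPred_eq]
    induction hf using Submodule.span_induction with
    | mem f hf => exact h f hf
    | zero => simpa using tendsto_const_nhds
    | add f g _ _ hf hg =>
      simpa [integral_add (hinteg _ f) (hinteg _ g)] using hf.add hg
    | smul c f _ hf => simpa [integral_const_mul] using hf.const_mul c
  rw [ProbabilityMeasure.tendsto_iff_forall_integral_rclike_tendsto ℂ]
  intro f
  have hf : f.toContinuousMap ∈ (Submodule.span ℂ s).topologicalClosure := hs ▸ Submodule.mem_top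
  exact closure_minimal hspan hclosed hf

-- The closure of `f ⁻¹' C`, for `C` closed, adds to it only points where `f` is discontinuous.
lemma tendsto_map_probabilityMeasure_of_ae_continuousAt {X Y : Type*} [TopologicalSpace X]
    [HasOuterApproxClosed X] [MeasurableSpace X] [OpensMeasurableSpace X] [TopologicalSpace Y]
    [MeasurableSpace Y] [OpensMeasurableSpace Y] [l.IsCountablyGenerated]
    {μ : ι → ProbabilityMeasure X} {ν : ProbabilityMeasure X} (hμ : Tendsto μ l (𝓝 ν))
    {f : X → Y} (hf : Measurable f) (hcont : ∀ᵐ x ∂(ν : Measure X), ContinuousAt f x) :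
    Tendsto (fun i => (μ i).map hf.aemeasurable) l (𝓝 (ν.map hf.aemeasurable)) := by
  refine tendsto_of_forall_isClosed_limsup_le' fun C hC => ?_
  simp only [ProbabilityMeasure.toMeasure_map, Measure.map_apply hf hC.measurableSet]
  calc l.limsup (fun i => (μ i : Measure X) (f ⁻¹' C))
      ≤ l.limsup (fun i => (μ i : Measure X) (closure (f ⁻¹' C))) :=
        limsup_le_limsup (Eventually.of_forall fun i => measure_mono subset_closure)
    _ ≤ (ν : Measure X) (closure (f ⁻¹' C)) :=
        ProbabilityMeasure.limsup_measure_closed_le_of_tendsto hμ isClosed_closure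
    _ ≤ (ν : Measure X) (f ⁻¹' C) := by
        refine measure_mono_ae ?_
        filter_upwards [hcont] with x hx hxC
        exact closure_minimal (image_preimage_subset f C) hC (mem_closure_image hx hxC)

lemma tendsto_integral_of_ae_continuousAt {X : Type*} [TopologicalSpace X]
    [HasOuterApproxClosed X] [MeasurableSpace X] [OpensMeasurableSpace X] [l.IsCountablyGenerated]
    {μ : ι → ProbabilityMeasure X} {ν : ProbabilityMeasure X} (hμ : Tendsto μ l (𝓝 ν))
    {f : X → ℝ} (hf : Measurable f) {C : ℝ} (hC : ∀ x, |f x| ≤ C)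
    (hcont : ∀ᵐ x ∂(ν : Measure X), ContinuousAt f x) :
    Tendsto (fun i => ∫ x, f x ∂(μ i : Measure X)) l (𝓝 (∫ x, f x ∂(ν : Measure X))) := by
  let clamp : BoundedContinuousFunction ℝ ℝ := .ofNormedAddCommGroup
    (fun y => max (-C) (min C y)) (by fun_prop) |C| fun y => by
      rw [Real.norm_eq_abs, abs_le]
      exact ⟨(neg_le_neg (le_abs_self C)).trans (le_max_left _ _),
        max_le (neg_le_abs C) ((min_le_left _ _).trans (le_abs_self C))⟩
  have hclamp (x : X) : clamp (f x) = f x := by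
    obtain ⟨h₁, h₂⟩ := abs_le.1 (hC x)
    simp [clamp, h₁, h₂]
  have key := (ProbabilityMeasure.tendsto_iff_forall_integral_tendsto.1
    (tendsto_map_probabilityMeasure_of_ae_continuousAt hμ hf hcont)) clamp
  simpa only [ProbabilityMeasure.toMeasure_map, integral_map hf.aemeasurable
    clamp.continuous.aestronglyMeasurable, hclamp] using key

instance isProbabilityMeasure_volume_unitAddTorus {d : Type*} [Fintype d] :
    IsProbabilityMeasure (volume : Measure (UnitAddTorus d)) :=
  have : IsProbabilityMeasure (volume : Measure UnitAddCircle) := ⟨by simp⟩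
  inferInstanceAs (IsProbabilityMeasure (Measure.pi fun _ : d => (volume : Measure UnitAddCircle)))

lemma tendsto_volume_of_tendsto_integral_mFourier {d : Type*} [Fintype d]
    {μ : ι → ProbabilityMeasure (UnitAddTorus d)}
    (h : ∀ k : d → ℤ, k ≠ 0 →
      Tendsto (fun i => ∫ x, UnitAddTorus.mFourier k x ∂(μ i : Measure (UnitAddTorus d))) l (𝓝 0)) :
    Tendsto μ l (𝓝 ⟨volume, inferInstance⟩) := by
  refine tendsto_probabilityMeasure_of_span_closure_eq_top
    UnitAddTorus.span_mFourier_closure_eq_top ?_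
  rintro _ ⟨k, rfl⟩
  by_cases hk : k = 0
  · simpa [hk, UnitAddTorus.mFourier_zero] using tendsto_const_nhds
  · obtain ⟨i, hi⟩ := Function.ne_iff.1 hk
    have hvol : ∫ x : UnitAddTorus d, UnitAddTorus.mFourier k x = 0 := by
      simp only [UnitAddTorus.mFourier, ContinuousMap.coe_mk]
      rw [volume_pi, integral_fintype_prod_eq_prod]
      exact Finset.prod_eq_zero (Finset.mem_univ i) (integral_eq_zero_of_add_right_eq_neg
        (fourier_add_half_inv_index (T := 1) hi one_pos))
    simpa [hvol] using h k hk

end WeakConvergence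

section ModularHyperbola

/-- The average of `F (x / n) (x⁻¹ / n)` over the residues `x` coprime to `n`, where `x` and its
inverse modulo `n` are both represented in `[0, n)`. -/
noncomputable def unitAverage (n : ℕ) (F : ℝ → ℝ → ℝ) : ℝ :=
  (∑ x ∈ Finset.range n with n.Coprime x, F ((x : ℝ) / n) (((x : ZMod n)⁻¹.val : ℝ) / n)) /
    n.totient

/-- The points `(u / n, u⁻¹ / n)` of the torus, for `u` a unit modulo `n`, with equal weights. -/
noncomputable def modularHyperbola (n : ℕ) [NeZero n] :
    ProbabilityMeasure (UnitAddTorus (Fin 2)) :=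
  ⟨((PMF.uniformOfFintype (ZMod n)ˣ).map fun u : (ZMod n)ˣ =>
    ![ZMod.toAddCircle (u : ZMod n), ZMod.toAddCircle (↑u⁻¹ : ZMod n)]).toMeasure, inferInstance⟩

lemma integral_modularHyperbola (n : ℕ) [NeZero n] {E : Type*} [NormedAddCommGroup E]
    [NormedSpace ℝ E] [CompleteSpace E] {f : UnitAddTorus (Fin 2) → E}
    (hf : StronglyMeasurable f) :
    ∫ x, f x ∂(modularHyperbola n : Measure (UnitAddTorus (Fin 2))) =
      (n.totient : ℝ)⁻¹ • ∑ u : (ZMod n)ˣ,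
        f ![ZMod.toAddCircle (u : ZMod n), ZMod.toAddCircle (↑u⁻¹ : ZMod n)] := by
  let _ : MeasurableSpace (ZMod n)ˣ := ⊤
  have _ : MeasurableSingletonClass (ZMod n)ˣ := ⟨fun _ => trivial⟩
  have hmeas : Measurable fun u : (ZMod n)ˣ =>
      ![ZMod.toAddCircle (u : ZMod n), ZMod.toAddCircle (↑u⁻¹ : ZMod n)] := fun _ _ => trivial
  rw [modularHyperbola, ProbabilityMeasure.coe_mk, ← PMF.toMeasure_map _ _ hmeas,
    integral_map hmeas.aemeasurable hf.aestronglyMeasurable, PMF.integral_eq_sum, Finset.smul_sum]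
  simp [ZMod.card_units_eq_totient]

lemma fourier_toAddCircle (n : ℕ) [NeZero n] (h : ℤ) (j : ZMod n) :
    fourier h (ZMod.toAddCircle j) = ZMod.stdAddChar ((h : ZMod n) * j) := by
  rw [fourier_apply, ← map_zsmul, zsmul_eq_mul, ZMod.stdAddChar_apply]
  rfl

lemma tendsto_modularHyperbola :
    Tendsto (fun n : ℕ => modularHyperbola (n + 1)) atTop (𝓝 ⟨volume, inferInstance⟩) := by
  refine tendsto_volume_of_tendsto_integral_mFourier fun k hk => ?_
  have hk' : (k 0, k 1) ≠ 0 := fun h => hk (by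
    ext i; fin_cases i; exacts [congrArg Prod.fst h, congrArg Prod.snd h])
  refine (tendsto_kloostermanSum_div_totient hk').congr fun n => ?_
  rw [integral_modularHyperbola _ (UnitAddTorus.mFourier k).continuous.stronglyMeasurable,
    kloostermanSum, Complex.real_smul, div_eq_inv_mul]
  push_cast
  congr 1
  refine Finset.sum_congr rfl fun u _ => ?_
  simp only [UnitAddTorus.mFourier, ContinuousMap.coe_mk, Fin.prod_univ_two, Matrix.cons_val_zero,
    Matrix.cons_val_one, fourier_toAddCircle, AddChar.map_add_eq_mul]

lemma liftIco_toAddCircle {n : ℕ} [NeZero n] {E : Type*} (F : ℝ → E) (j : ZMod n) :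
    AddCircle.liftIco (1 : ℝ) 0 F (ZMod.toAddCircle j) = F ((j.val : ℝ) / n) := by
  have hn : (0 : ℝ) < n := Nat.cast_pos.2 (NeZero.pos n)
  rw [ZMod.toAddCircle_apply, AddCircle.liftIco_zero_coe_apply]
  exact ⟨by positivity, (div_lt_one hn).2 (mod_cast ZMod.val_lt j)⟩

lemma unitAverage_mul_eq_integral (n : ℕ) [NeZero n] {F G : ℝ → ℝ}
    (hF : Measurable (AddCircle.liftIco (1 : ℝ) 0 F))
    (hG : Measurable (AddCircle.liftIco (1 : ℝ) 0 G)) :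
    unitAverage n (fun x w => F x * G w) =
      ∫ z, AddCircle.liftIco (1 : ℝ) 0 F (z 0) * AddCircle.liftIco (1 : ℝ) 0 G (z 1)
        ∂(modularHyperbola n : Measure (UnitAddTorus (Fin 2))) := by
  have hmeas (i : Fin 2) {H : UnitAddCircle → ℝ} (hH : Measurable H) :
      Measurable fun z : UnitAddTorus (Fin 2) => H (z i) := hH.comp (measurable_pi_apply i)
  have hprod : Measurable fun z : UnitAddTorus (Fin 2) =>
      AddCircle.liftIco (1 : ℝ) 0 F (z 0) * AddCircle.liftIco (1 : ℝ) 0 G (z 1) :=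
    (hmeas 0 hF).mul (hmeas 1 hG)
  rw [integral_modularHyperbola n hprod.stronglyMeasurable, unitAverage, smul_eq_mul,
    div_eq_inv_mul]
  congr 1
  refine Finset.sum_bij' (fun x hx => ZMod.unitOfCoprime x (Finset.mem_filter.1 hx).2.symm)
    (fun u _ => (u : ZMod n).val) (fun _ _ => Finset.mem_univ _)
    (fun u _ => Finset.mem_filter.2 ⟨Finset.mem_range.2 (ZMod.val_lt _),
      (ZMod.val_coe_unit_coprime u).symm⟩) (fun x hx => ?_) (fun u _ => ?_) (fun x hx => ?_)
  · simp [ZMod.val_natCast_of_lt (Finset.mem_range.1 (Finset.mem_filter.1 hx).1)]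
  · ext; simp
  · simp [liftIco_toAddCircle, ← ZMod.inv_coe_unit,
      ZMod.val_natCast_of_lt (Finset.mem_range.1 (Finset.mem_filter.1 hx).1)]

lemma measurable_liftIco {F : ℝ → ℝ} (hF : Measurable F) :
    Measurable (AddCircle.liftIco (1 : ℝ) 0 F) :=
  hF.comp (measurable_subtype_coe.comp (AddCircle.measurableEquivIco 1 0).measurable)

lemma ae_continuousAt_liftIco {F : ℝ → ℝ} (hF : ∀ᵐ x, x ∈ Ioo (0 : ℝ) 1 → ContinuousAt F x) :
    ∀ᵐ z : UnitAddCircle, ContinuousAt (AddCircle.liftIco (1 : ℝ) 0 F) z := by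
  rw [← (AddCircle.measurePreserving_mk 1 0).map_eq, ae_map_iff
    (AddCircle.measurePreserving_mk 1 0).measurable.aemeasurable
    (measurableSet_of_continuousAt _), zero_add]
  filter_upwards [ae_restrict_of_ae hF, ae_restrict_of_ae (Measure.ae_ne volume (1 : ℝ)),
    ae_restrict_mem measurableSet_Ioc] with x hx hx1 hmem
  have hIoo : x ∈ Ioo (0 : ℝ) 1 := ⟨hmem.1, hmem.2.lt_of_ne hx1⟩
  have hne : (x : UnitAddCircle) ≠ (0 : ℝ) := by
    rw [Ne, AddCircle.coe_eq_coe_iff_of_mem_Ico (a := 0)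
      (by simpa using ⟨hIoo.1.le, hIoo.2⟩) (by simp)]
    exact hIoo.1.ne'
  have hval : ((AddCircle.equivIco 1 0 (x : UnitAddCircle) : Ico (0 : ℝ) (0 + 1)) : ℝ) = x := by
    rw [AddCircle.equivIco_coe_of_mem (by simpa using ⟨hIoo.1.le, hIoo.2⟩)]
  exact ContinuousAt.comp (g := F) (by rw [hval]; exact hx hIoo)
    (continuousAt_subtype_val.comp (AddCircle.continuousAt_equivIco 1 0 hne))

lemma integral_liftIco (F : ℝ → ℝ) :
    ∫ z : UnitAddCircle, AddCircle.liftIco (1 : ℝ) 0 F z = ∫ x in (0 : ℝ)..1, F x := by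
  rw [← UnitAddCircle.intervalIntegral_preimage 0]
  simp only [zero_add]
  refine intervalIntegral.integral_congr_ae ?_
  filter_upwards [Measure.ae_ne volume (1 : ℝ)] with x hx1 hx
  rw [uIoc_of_le zero_le_one] at hx
  exact AddCircle.liftIco_zero_coe_apply ⟨hx.1.le, hx.2.lt_of_ne hx1⟩

theorem tendsto_unitAverage_mul {F G : ℝ → ℝ} {A B : ℝ} (hF : Measurable F) (hG : Measurable G)
    (hFA : ∀ x ∈ Ico (0 : ℝ) 1, |F x| ≤ A) (hGB : ∀ x ∈ Ico (0 : ℝ) 1, |G x| ≤ B)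
    (hFc : ∀ᵐ x, x ∈ Ioo (0 : ℝ) 1 → ContinuousAt F x)
    (hGc : ∀ᵐ x, x ∈ Ioo (0 : ℝ) 1 → ContinuousAt G x) :
    Tendsto (fun n => unitAverage n fun x w => F x * G w) atTop
      (𝓝 ((∫ x in (0 : ℝ)..1, F x) * ∫ x in (0 : ℝ)..1, G x)) := by
  have hbound {H : ℝ → ℝ} {C : ℝ} (hH : ∀ x ∈ Ico (0 : ℝ) 1, |H x| ≤ C) (z : UnitAddCircle) :
      |AddCircle.liftIco (1 : ℝ) 0 H z| ≤ C :=
    hH _ (by simpa using (AddCircle.equivIco 1 0 z).2)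
  have hcoord (i : Fin 2) {H : ℝ → ℝ} (hH : ∀ᵐ x, x ∈ Ioo (0 : ℝ) 1 → ContinuousAt H x) :
      ∀ᵐ z : UnitAddTorus (Fin 2), ContinuousAt
        (fun z : UnitAddTorus (Fin 2) => AddCircle.liftIco (1 : ℝ) 0 H (z i)) z := by
    have hqmp : Measure.QuasiMeasurePreserving (fun z : UnitAddTorus (Fin 2) => z i) :=
      Measure.quasiMeasurePreserving_eval _ i
    filter_upwards [hqmp.ae (ae_continuousAt_liftIco hH)] with z hz
    exact ContinuousAt.comp (g := AddCircle.liftIco (1 : ℝ) 0 H) hz (continuousAt_apply i z)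
  have hmeas (i : Fin 2) {H : ℝ → ℝ} (hH : Measurable H) :
      Measurable fun z : UnitAddTorus (Fin 2) => AddCircle.liftIco (1 : ℝ) 0 H (z i) :=
    (measurable_liftIco hH).comp (measurable_pi_apply i)
  have key := tendsto_integral_of_ae_continuousAt tendsto_modularHyperbola
    ((hmeas 0 hF).mul (hmeas 1 hG)) (C := A * B)
    (fun z => (abs_mul _ _).le.trans (mul_le_mul (hbound hFA _) (hbound hGB _) (abs_nonneg _)
      ((abs_nonneg _).trans (hbound hFA 0))))
    (by filter_upwards [hcoord 0 hFc, hcoord 1 hGc] with z h₀ h₁ using h₀.mul h₁)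
  have hprod : ∫ z : UnitAddTorus (Fin 2),
      AddCircle.liftIco (1 : ℝ) 0 F (z 0) * AddCircle.liftIco (1 : ℝ) 0 G (z 1) =
      (∫ x in (0 : ℝ)..1, F x) * ∫ x in (0 : ℝ)..1, G x := by
    have h := integral_fintype_prod_eq_prod (μ := fun _ : Fin 2 => (volume : Measure UnitAddCircle))
      ![AddCircle.liftIco (1 : ℝ) 0 F, AddCircle.liftIco (1 : ℝ) 0 G]
    simpa [Fin.prod_univ_two, integral_liftIco, ← volume_pi] using h
  refine (tendsto_add_atTop_iff_nat 1).1 ?_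
  simp_rw [unitAverage_mul_eq_integral _ (measurable_liftIco hF) (measurable_liftIco hG)]
  exact hprod ▸ key

end ModularHyperbola

section WeightedRiemannSums

variable {c : ℕ → ℝ} {B C : ℝ}

lemma tendsto_mean_mul (hcB : ∀ n, |c n| ≤ B)
    (hmean : Tendsto (fun n : ℕ => (∑ k ∈ Finset.range n, c k) / n) atTop (𝓝 C))
    {g : ℕ → ℝ} {y : ℝ} (hg : Tendsto g atTop (𝓝 y)) :
    Tendsto (fun n : ℕ => (∑ k ∈ Finset.range n, c k * g k) / n) atTop (𝓝 (C * y)) := by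
  have hzero : Tendsto (fun k => c k * (g k - y)) atTop (𝓝 0) :=
    bdd_le_mul_tendsto_zero' B (Eventually.of_forall hcB)
      (by simpa using hg.sub_const y)
  have hsum := (hmean.mul_const y).add hzero.cesaro
  rw [add_zero] at hsum
  refine hsum.congr fun n => ?_
  rw [← div_eq_inv_mul, div_mul_eq_mul_div, ← add_div, Finset.sum_mul, ← Finset.sum_add_distrib]
  congr 1
  exact Finset.sum_congr rfl fun k _ => by ring

lemma tendsto_sum_Ico_div
    (hmean : Tendsto (fun n : ℕ => (∑ k ∈ Finset.range n, c k) / n) atTop (𝓝 C))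
    {s t : ℝ → ℕ} {u v : ℝ} (hu : 0 < u) (hv : 0 < v)
    (hs : Tendsto (fun R => (s R : ℝ) / R) atTop (𝓝 u))
    (ht : Tendsto (fun R => (t R : ℝ) / R) atTop (𝓝 v)) (hst : ∀ᶠ R in atTop, s R ≤ t R) :
    Tendsto (fun R => (∑ n ∈ Finset.Ico (s R) (t R), c n) / R) atTop (𝓝 (C * (v - u))) := by
  have hpartial {r : ℝ → ℕ} {w : ℝ} (hw : 0 < w)
      (hr : Tendsto (fun R => (r R : ℝ) / R) atTop (𝓝 w)) :
      Tendsto (fun R => (∑ n ∈ Finset.range (r R), c n) / R) atTop (𝓝 (C * w)) := by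
    have htop : Tendsto (fun R => (r R : ℝ)) atTop atTop :=
      (hr.pos_mul_atTop hw tendsto_id).congr' <| by
        filter_upwards [eventually_ne_atTop 0] with R hR using div_mul_cancel₀ _ hR
    refine ((hmean.comp (tendsto_natCast_atTop_iff.1 htop)).mul hr).congr' ?_
    filter_upwards [htop.eventually_ne_atTop 0] with R hR
    exact div_mul_div_cancel₀ hR
  rw [mul_sub]
  refine ((hpartial hv ht).sub (hpartial hu hs)).congr' ?_
  filter_upwards [hst] with R hR
  rw [Finset.sum_Ico_eq_sub _ hR, sub_div]

lemma sum_range_sum_Ico_consecutive {M : Type*} [AddCommMonoid M] (F : ℕ → M) {u : ℕ → ℕ}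
    (hu : Monotone u) (m : ℕ) :
    ∑ i ∈ Finset.range m, ∑ n ∈ Finset.Ico (u i) (u (i + 1)), F n =
      ∑ n ∈ Finset.Ico (u 0) (u m), F n := by
  induction m with
  | zero => simp
  | succ m ih =>
    rw [Finset.sum_range_succ, ih, Finset.sum_Ico_consecutive F (hu m.zero_le) (hu m.le_succ)]

lemma antitoneOn_of_tendsto {f : ℕ → ℝ → ℝ} {g : ℝ → ℝ} {S : Set ℝ}
    (hanti : ∀ n, AntitoneOn (f n) S) (hlim : ∀ v ∈ S, Tendsto (f · v) atTop (𝓝 (g v))) :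
    AntitoneOn g S := fun u hu v hv huv =>
  le_of_tendsto_of_tendsto' (hlim v hv) (hlim u hu) fun n => hanti n hu hv huv

variable {f : ℕ → ℝ → ℝ} {g : ℝ → ℝ} {a b : ℝ}

lemma integral_mem_Icc_of_antitoneOn (hab : a ≤ b) (hg : AntitoneOn g (Icc a b)) :
    ∫ v in a..b, g v ∈ Icc ((b - a) * g b) ((b - a) * g a) := by
  have hinteg : IntervalIntegrable g volume a b :=
    AntitoneOn.intervalIntegrable (by rwa [uIcc_of_le hab])
  constructor
  · simpa using intervalIntegral.integral_mono_on hab intervalIntegrable_const hinteg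
      fun v hv => hg hv (right_mem_Icc.2 hab) hv.2
  · simpa using intervalIntegral.integral_mono_on hab hinteg intervalIntegrable_const
      fun v hv => hg (left_mem_Icc.2 hab) hv hv.1

lemma eventually_abs_sum_Ico_ceil_sub_integral_le (hc : ∀ n, 0 ≤ c n) (hcB : ∀ n, c n ≤ B)
    (hmean : Tendsto (fun n : ℕ => (∑ k ∈ Finset.range n, c k) / n) atTop (𝓝 C))
    (ha : 0 < a) (hab : a < b) (hanti : ∀ n, AntitoneOn (f n) (Icc a b))
    (hlim : ∀ v ∈ Icc a b, Tendsto (f · v) atTop (𝓝 (g v))) {η : ℝ} (hη : 0 < η) :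
    ∀ᶠ R : ℝ in atTop, |(∑ n ∈ Finset.Ico ⌈a * R⌉₊ ⌈b * R⌉₊, c n * f n (n / R)) / R -
      C * ∫ v in a..b, g v| ≤ C * (b - a) * (g a - g b) + η := by
  have hamem : a ∈ Icc a b := left_mem_Icc.2 hab.le
  have hbmem : b ∈ Icc a b := right_mem_Icc.2 hab.le
  have hC : 0 ≤ C := ge_of_tendsto' hmean fun n =>
    div_nonneg (Finset.sum_nonneg fun k _ => hc k) n.cast_nonneg
  obtain ⟨hle_int, hint_le⟩ :=
    integral_mem_Icc_of_antitoneOn hab.le (antitoneOn_of_tendsto hanti hlim)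
  have hconst {v : ℝ} (hv : v ∈ Icc a b) :
      Tendsto (fun R => (∑ n ∈ Finset.Ico ⌈a * R⌉₊ ⌈b * R⌉₊, c n * f n v) / R) atTop
        (𝓝 (C * g v * (b - a))) :=
    tendsto_sum_Ico_div (tendsto_mean_mul (fun n => (abs_of_nonneg (hc n)).trans_le (hcB n)) hmean
      (hlim v hv)) ha (ha.trans hab) (tendsto_nat_ceil_mul_div_atTop ha.le)
      (tendsto_nat_ceil_mul_div_atTop (ha.trans hab).le)
      (by filter_upwards [eventually_ge_atTop 0] with R hR using Nat.ceil_mono (by gcongr))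
  filter_upwards [(hconst hamem).eventually_le_const (lt_add_of_pos_right _ hη),
    (hconst hbmem).eventually_const_le (sub_lt_self _ hη), eventually_gt_atTop 0] with R hup hlow hR
  have hmem {n : ℕ} (hn : n ∈ Finset.Ico ⌈a * R⌉₊ ⌈b * R⌉₊) : (n : ℝ) / R ∈ Icc a b := by
    rw [Finset.mem_Ico, Nat.ceil_le, Nat.lt_ceil] at hn
    exact ⟨(le_div_iff₀ hR).2 hn.1, (div_le_iff₀ hR).2 hn.2.le⟩
  have hsum_up : (∑ n ∈ Finset.Ico ⌈a * R⌉₊ ⌈b * R⌉₊, c n * f n (n / R)) / R ≤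
      (∑ n ∈ Finset.Ico ⌈a * R⌉₊ ⌈b * R⌉₊, c n * f n a) / R := by
    gcongr with n hn
    exacts [hc n, hanti n hamem (hmem hn) (hmem hn).1]
  have hsum_low : (∑ n ∈ Finset.Ico ⌈a * R⌉₊ ⌈b * R⌉₊, c n * f n b) / R ≤
      (∑ n ∈ Finset.Ico ⌈a * R⌉₊ ⌈b * R⌉₊, c n * f n (n / R)) / R := by
    gcongr with n hn
    exacts [hc n, hanti n (hmem hn) hbmem (hmem hn).2]
  rw [abs_le]
  constructor <;> nlinarith

lemma sum_Ico_ceil_sub_integral_eq_sum (F : ℕ → ℝ) (C : ℝ) {v : ℕ → ℝ} (hv : Monotone v) {m : ℕ}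
    (hg : AntitoneOn g (Icc (v 0) (v m))) {R : ℝ} (hR : 0 ≤ R) :
    (∑ n ∈ Finset.Ico ⌈v 0 * R⌉₊ ⌈v m * R⌉₊, F n) / R - C * ∫ x in v 0..v m, g x =
      ∑ i ∈ Finset.range m, ((∑ n ∈ Finset.Ico ⌈v i * R⌉₊ ⌈v (i + 1) * R⌉₊, F n) / R -
        C * ∫ x in v i..v (i + 1), g x) := by
  have hinteg {i : ℕ} (hi : i < m) : IntervalIntegrable g volume (v i) (v (i + 1)) := by
    refine AntitoneOn.intervalIntegrable ?_
    rw [uIcc_of_le (hv i.le_succ)]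
    exact hg.mono (Icc_subset_Icc (hv i.zero_le) (hv hi))
  rw [Finset.sum_sub_distrib, ← Finset.sum_div, ← Finset.mul_sum,
    intervalIntegral.sum_integral_adjacent_intervals (a := v) fun i hi => hinteg hi,
    sum_range_sum_Ico_consecutive F (u := fun i => ⌈v i * R⌉₊)
      fun i j hij => Nat.ceil_mono (mul_le_mul_of_nonneg_right (hv hij) hR)]

lemma exists_strictMono_sub_eq_div (hab : a < b) {M : ℕ} (hM : 0 < M) :
    ∃ v : ℕ → ℝ, StrictMono v ∧ v 0 = a ∧ v M = b ∧ ∀ i, v (i + 1) - v i = (b - a) / M := by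
  have hM' : (0 : ℝ) < M := Nat.cast_pos.2 hM
  have hstep (i : ℕ) : a + (i + 1 : ℕ) * ((b - a) / M) - (a + i * ((b - a) / M)) = (b - a) / M := by
    push_cast; ring
  refine ⟨fun i => a + i * ((b - a) / M), strictMono_nat_of_lt_succ fun i => ?_, by simp,
    by field_simp; ring, hstep⟩
  exact sub_pos.1 ((div_pos (sub_pos.2 hab) hM').trans_eq (hstep i).symm)

lemma tendsto_sum_Ico_ceil_mul_div (hc : ∀ n, 0 ≤ c n) (hcB : ∀ n, c n ≤ B)
    (hmean : Tendsto (fun n : ℕ => (∑ k ∈ Finset.range n, c k) / n) atTop (𝓝 C))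
    (ha : 0 < a) (hab : a < b) (hanti : ∀ n, AntitoneOn (f n) (Icc a b))
    (hlim : ∀ v ∈ Icc a b, Tendsto (f · v) atTop (𝓝 (g v))) :
    Tendsto (fun R => (∑ n ∈ Finset.Ico ⌈a * R⌉₊ ⌈b * R⌉₊, c n * f n (n / R)) / R) atTop
      (𝓝 (C * ∫ v in a..b, g v)) := by
  rw [Metric.tendsto_nhds]
  intro ε hε
  -- The errors over the cells of a uniform partition into `M` intervals telescope.
  obtain ⟨M, hM, hM0⟩ : ∃ M : ℕ, C * ((b - a) / M) * (g a - g b) < ε / 2 ∧ 0 < M := by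
    have h : Tendsto (fun M : ℕ => C * ((b - a) / M) * (g a - g b)) atTop (𝓝 0) := by
      simpa using ((tendsto_const_div_atTop_nhds_zero_nat (b - a)).const_mul C).mul_const
        (g a - g b)
    exact ((h.eventually_lt_const (half_pos hε)).and (eventually_gt_atTop 0)).exists
  have : (0 : ℝ) < M := Nat.cast_pos.2 hM0
  obtain ⟨v, hmono, hv0, hvM, hstep⟩ := exists_strictMono_sub_eq_div hab hM0
  have hsub {i : ℕ} (hi : i < M) : Icc (v i) (v (i + 1)) ⊆ Icc a b :=
    Icc_subset_Icc (hv0 ▸ hmono.monotone i.zero_le) (hvM ▸ hmono.monotone hi)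
  have hpiece : ∀ᶠ R : ℝ in atTop, ∀ i ∈ Finset.range M,
      |(∑ n ∈ Finset.Ico ⌈v i * R⌉₊ ⌈v (i + 1) * R⌉₊, c n * f n (n / R)) / R -
        C * ∫ x in v i..v (i + 1), g x| ≤
      C * ((b - a) / M) * (g (v i) - g (v (i + 1))) + ε / (2 * M) := by
    rw [Finset.eventually_all]
    intro i hi
    rw [← hstep i]
    have hiM := hsub (Finset.mem_range.1 hi)
    exact eventually_abs_sum_Ico_ceil_sub_integral_le hc hcB hmean
      (ha.trans_le (hv0 ▸ hmono.monotone i.zero_le)) (hmono i.lt_succ_self)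
      (fun n => (hanti n).mono hiM) (fun x hx => hlim x (hiM hx)) (by positivity)
  filter_upwards [hpiece, eventually_ge_atTop 0] with R hR hR0
  have hsplit := sum_Ico_ceil_sub_integral_eq_sum (fun n => c n * f n (n / R)) C hmono.monotone
    (m := M) (by simpa only [hv0, hvM] using antitoneOn_of_tendsto hanti hlim) hR0
  rw [hv0, hvM] at hsplit
  rw [Real.dist_eq, hsplit]
  calc _ ≤ ∑ i ∈ Finset.range M,
        (C * ((b - a) / M) * (g (v i) - g (v (i + 1))) + ε / (2 * M)) :=
      (Finset.abs_sum_le_sum_abs _ _).trans (Finset.sum_le_sum hR)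
    _ = C * ((b - a) / M) * (g a - g b) + ε / 2 := by
      rw [Finset.sum_add_distrib, ← Finset.mul_sum, Finset.sum_range_sub', hv0, hvM]
      simp; field_simp
    _ < ε := by linarith

lemma tendsto_sum_Ioo_floor_ceil_mul_div (hc : ∀ n, 0 ≤ c n) (hcB : ∀ n, c n ≤ B)
    (hmean : Tendsto (fun n : ℕ => (∑ k ∈ Finset.range n, c k) / n) atTop (𝓝 C))
    (ha : 0 < a) (hab : a < b) (hanti : ∀ n, AntitoneOn (f n) (Icc a b))
    (hlim : ∀ v ∈ Icc a b, Tendsto (f · v) atTop (𝓝 (g v))) :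
    Tendsto (fun R => (∑ n ∈ Finset.Ioo ⌊a * R⌋₊ ⌈b * R⌉₊, c n * f n (n / R)) / R) atTop
      (𝓝 (C * ∫ v in a..b, g v)) := by
  have hfloor : Tendsto (fun R => ((⌊a * R⌋₊ + 1 : ℕ) : ℝ) / R) atTop (𝓝 a) := by
    simpa [add_div] using (tendsto_nat_floor_mul_div_atTop ha.le).add tendsto_inv_atTop_zero
  have hfirst : Tendsto (fun R => (∑ n ∈ Finset.Ico ⌈a * R⌉₊ (⌊a * R⌋₊ + 1), c n * f n a) / R)
      atTop (𝓝 0) := by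
    simpa using tendsto_sum_Ico_div
      (tendsto_mean_mul (fun n => (abs_of_nonneg (hc n)).trans_le (hcB n)) hmean (hlim a
        (left_mem_Icc.2 hab.le))) ha ha (tendsto_nat_ceil_mul_div_atTop ha.le) hfloor
      (Eventually.of_forall fun R => Nat.ceil_le_floor_add_one _)
  have hdiff := (tendsto_sum_Ico_ceil_mul_div hc hcB hmean ha hab hanti hlim).sub hfirst
  rw [sub_zero] at hdiff
  refine hdiff.congr' ?_
  have hlt : ∀ᶠ R : ℝ in atTop, ⌊a * R⌋₊ + 1 ≤ ⌈b * R⌉₊ := by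
    filter_upwards [eventually_gt_atTop 0] with R hR
    exact Nat.lt_ceil.2 ((Nat.floor_le (by positivity)).trans_lt (by gcongr))
  filter_upwards [hlt, eventually_gt_atTop 0] with R hR hR0
  rw [← sub_div, ← Finset.sum_Ico_consecutive _ (Nat.ceil_le_floor_add_one _) hR]
  have hpoint : ∑ n ∈ Finset.Ico ⌈a * R⌉₊ (⌊a * R⌋₊ + 1), c n * f n (n / R) =
      ∑ n ∈ Finset.Ico ⌈a * R⌉₊ (⌊a * R⌋₊ + 1), c n * f n a := by
    refine Finset.sum_congr rfl fun n hn => ?_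
    rw [Finset.mem_Ico, Nat.ceil_le, Nat.lt_succ_iff, Nat.le_floor_iff (by positivity)] at hn
    rw [le_antisymm hn.2 hn.1, mul_div_cancel_right₀ _ hR0.ne']
  rw [hpoint, add_sub_cancel_left]
  rfl

end WeightedRiemannSums

section MeanTotient

open ArithmeticFunction

lemma hasSum_moebius_div_sq : HasSum (fun d : ℕ => (moebius d : ℝ) / d ^ 2) (6 / Real.pi ^ 2) := by
  have htwo : (1 : ℝ) < (2 : ℂ).re := by norm_num
  have hpi : (Real.pi : ℂ) ≠ 0 := by exact_mod_cast Real.pi_ne_zero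
  have hvalue : LSeries (fun n => ((moebius n : ℤ) : ℂ)) 2 = ((6 / Real.pi ^ 2 : ℝ) : ℂ) := by
    have h := LSeries_zeta_mul_Lseries_moebius htwo
    rw [LSeries_zeta_eq_riemannZeta htwo, riemannZeta_two] at h
    push_cast
    field_simp at h ⊢
    linear_combination h
  have hterm (d : ℕ) : LSeries.term (fun n => ((moebius n : ℤ) : ℂ)) 2 d =
      (((moebius d : ℝ) / d ^ 2 : ℝ) : ℂ) := by
    rcases eq_or_ne d 0 with rfl | hd
    · simp
    · rw [LSeries.term_of_ne_zero hd]
      norm_cast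
  have hsum := (LSeriesSummable_moebius_iff.2 htwo).LSeriesHasSum
  rw [hvalue, LSeriesHasSum] at hsum
  rwa [funext hterm, Complex.hasSum_ofReal] at hsum

lemma totient_div_eq_sum_moebius_div {n : ℕ} (hn : 0 < n) :
    (n.totient : ℝ) / n = ∑ d ∈ n.divisors, (moebius d : ℝ) / d := by
  have hinv := (sum_eq_iff_sum_mul_moebius_eq (R := ℝ) (f := fun n => (n.totient : ℝ))
    (g := fun n => (n : ℝ))).1 (fun n _ => by exact_mod_cast Nat.sum_totient n) n hn
  rw [Nat.sum_divisorsAntidiagonal (f := fun x y : ℕ => ((moebius x : ℤ) : ℝ) * (y : ℝ))] at hinv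
  rw [← hinv, Finset.sum_div]
  refine Finset.sum_congr rfl fun d hd => ?_
  have hd0 : (d : ℝ) ≠ 0 := Nat.cast_ne_zero.2 (Nat.pos_of_mem_divisors hd).ne'
  have hn0 : (n : ℝ) ≠ 0 := Nat.cast_ne_zero.2 hn.ne'
  rw [Nat.cast_div (Nat.dvd_of_mem_divisors hd) hd0]
  field_simp

lemma sum_totient_div_eq_tsum (N : ℕ) :
    ∑ n ∈ Finset.range (N + 1), (n.totient : ℝ) / n =
      ∑' d : ℕ, (moebius d : ℝ) / d * (N / d : ℕ) := by
  let f : ArithmeticFunction ℝ := ⟨fun d => (moebius d : ℝ) / d, by simp⟩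
  have hrange : Finset.range (N + 1) = insert 0 (Finset.Ioc 0 N) := by
    ext n; simp only [Finset.mem_range, Finset.mem_insert, Finset.mem_Ioc]; omega
  rw [hrange, Finset.sum_insert (by simp), Nat.cast_zero, div_zero, zero_add,
    tsum_eq_sum (s := Finset.Ioc 0 N) fun d hd => ?_]
  · refine Eq.trans ?_ (sum_Ioc_mul_zeta_eq_sum f N)
    refine Finset.sum_congr rfl fun n hn => ?_
    rw [coe_mul_zeta_apply, totient_div_eq_sum_moebius_div (Finset.mem_Ioc.1 hn).1]
    rfl
  · rcases Nat.eq_zero_or_pos d with rfl | hd0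
    · simp
    · rw [Nat.div_eq_of_lt (by simpa [hd0] using hd), Nat.cast_zero, mul_zero]

lemma tendsto_mean_totient_div :
    Tendsto (fun N : ℕ => (∑ n ∈ Finset.range N, (n.totient : ℝ) / n) / N) atTop
      (𝓝 (6 / Real.pi ^ 2)) := by
  rw [← tendsto_add_atTop_iff_nat 1, ← hasSum_moebius_div_sq.tsum_eq]
  simp_rw [sum_totient_div_eq_tsum, ← tsum_div_const]
  refine tendsto_tsum_of_dominated_convergence (bound := fun d : ℕ => 1 / (d : ℝ) ^ 2)
    (Real.summable_one_div_nat_pow.2 one_lt_two) (fun d => ?_)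
    (Eventually.of_forall fun N d => ?_)
  · have hfloor : Tendsto (fun N : ℕ => ((N / d : ℕ) : ℝ) / (N + 1 : ℕ)) atTop (𝓝 (1 / d)) := by
      have h := ((tendsto_nat_floor_mul_div_atTop (R := ℝ) (a := 1 / d) (by positivity)).comp
        tendsto_natCast_atTop_atTop).mul (tendsto_natCast_div_add_atTop (1 : ℝ))
      rw [mul_one] at h
      refine h.congr' ?_
      filter_upwards [eventually_ne_atTop 0] with N hN
      have hN' : (N : ℝ) ≠ 0 := Nat.cast_ne_zero.2 hN
      simp only [Function.comp_apply, one_div_mul_eq_div, Nat.floor_div_eq_div, Nat.cast_add_one]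
      field_simp
    convert hfloor.const_mul ((moebius d : ℝ) / d) using 2 <;> ring
  · have hfloor : ((N / d : ℕ) : ℝ) ≤ (N + 1 : ℕ) * (1 / d) := by
      rw [mul_one_div]
      exact Nat.cast_div_le.trans (by gcongr; exact N.le_succ)
    have hmoebius : |(moebius d : ℝ)| ≤ 1 := by exact_mod_cast abs_moebius_le_one
    rw [Real.norm_eq_abs, abs_div, abs_mul, abs_div, Nat.abs_cast, Nat.abs_cast, Nat.abs_cast,
      div_le_iff₀ (by positivity)]
    calc |(moebius d : ℝ)| / d * (N / d : ℕ) ≤ 1 / d * ((N + 1 : ℕ) * (1 / d)) := by gcongr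
      _ = 1 / (d : ℝ) ^ 2 * (N + 1 : ℕ) := by ring

end MeanTotient

section GaussMap

/-- The irrational numbers in `(0, 1)`: the points whose continued fraction is infinite. -/
def unitIrrationals : Set ℝ := {α | α ∈ Ioo (0 : ℝ) 1 ∧ Irrational α}

lemma irrational_gaussMap {x : ℝ} (hx : Irrational x) : Irrational (gaussMap x) := by
  rw [gaussMap, one_div, Int.fract]
  exact (irrational_inv_iff.2 hx).sub_intCast _

lemma irrational_iterate_gaussMap {x : ℝ} (hx : Irrational x) (n : ℕ) :
    Irrational (gaussMap^[n] x) :=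
  Function.Iterate.rec Irrational hx (fun _ h => irrational_gaussMap h) n

lemma gaussMap_mem_unitIrrationals {x : ℝ} (hx : Irrational x) : gaussMap x ∈ unitIrrationals := by
  have h := irrational_gaussMap hx
  exact ⟨⟨(Int.fract_nonneg _).lt_of_ne h.ne_zero.symm, Int.fract_lt_one _⟩, h⟩

variable {α : ℝ}

lemma iterate_gaussMap_mem_unitIrrationals (hα : α ∈ unitIrrationals) (n : ℕ) :
    gaussMap^[n] α ∈ unitIrrationals :=
  Function.Iterate.rec (· ∈ unitIrrationals) hα
    (fun _ h => gaussMap_mem_unitIrrationals h.2) n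

lemma pq_add_two (x : ℝ) (n : ℕ) : pq x (n + 2) = pq (gaussMap x) (n + 1) := rfl

lemma mul_pq_succ_add_iterate_gaussMap (hα : α ∈ unitIrrationals) (n : ℕ) :
    gaussMap^[n] α * (pq α (n + 1) + gaussMap^[n + 1] α) = 1 := by
  have h := (iterate_gaussMap_mem_unitIrrationals hα n).1.1
  rw [Function.iterate_succ_apply', pq, Nat.add_sub_cancel, gaussMap,
    natCast_floor_eq_intCast_floor (one_div_pos.2 h).le, Int.floor_add_fract,
    mul_one_div_cancel h.ne']

lemma one_le_pq_succ (hα : α ∈ unitIrrationals) (n : ℕ) : 1 ≤ pq α (n + 1) := by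
  have h := (iterate_gaussMap_mem_unitIrrationals hα n).1
  rw [pq, Nat.add_sub_cancel, Nat.one_le_floor_iff]
  exact (one_le_div h.1).2 h.2.le

lemma gaussMap_one_div_natCast_add (c : ℕ) {t : ℝ} (ht : t ∈ Ioo (0 : ℝ) 1) :
    gaussMap (1 / (c + t)) = t := by
  rw [gaussMap, one_div_one_div, Int.fract_natCast_add, Int.fract_eq_self]
  exact ⟨ht.1.le, ht.2⟩

lemma pq_one_div_natCast_add_one (c : ℕ) {t : ℝ} (ht : t ∈ Ioo (0 : ℝ) 1) :
    pq (1 / (c + t)) 1 = c := by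
  change ⌊1 / (1 / ((c : ℝ) + t))⌋₊ = c
  rw [one_div_one_div, Nat.floor_eq_iff (by linarith [ht.1, c.cast_nonneg (α := ℝ)])]
  constructor <;> linarith [ht.1, ht.2]

lemma pq_one_div_natCast_add_add_two (c : ℕ) {t : ℝ} (ht : t ∈ Ioo (0 : ℝ) 1) (n : ℕ) :
    pq (1 / (c + t)) (n + 2) = pq t (n + 1) := by
  rw [pq_add_two, gaussMap_one_div_natCast_add c ht]

lemma measurable_gaussMap : Measurable gaussMap :=
  measurable_fract.comp (measurable_const.div measurable_id)

lemma measurable_pq (n : ℕ) : Measurable fun x => pq x n :=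
  Nat.measurable_floor.comp (measurable_const.div (measurable_gaussMap.iterate _))

lemma eventually_floor_eq_of_irrational {y : ℝ} (hy : Irrational y) : ∀ᶠ z in 𝓝 y, ⌊z⌋ = ⌊y⌋ := by
  filter_upwards [Ioo_mem_nhds ((Int.floor_le y).lt_of_ne (hy.ne_int _).symm)
    (Int.lt_floor_add_one y)] with z hz
  exact Int.floor_eq_iff.2 ⟨hz.1.le, hz.2⟩

lemma continuousAt_gaussMap {x : ℝ} (hx : Irrational x) : ContinuousAt gaussMap x := by
  have hinv : ContinuousAt (fun z : ℝ => 1 / z) x :=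
    continuousAt_const.div continuousAt_id hx.ne_zero
  have hirr : Irrational (1 / x) := by simpa using hx
  refine (hinv.sub (continuousAt_const (y := (⌊1 / x⌋ : ℝ)))).congr ?_
  filter_upwards [hinv.eventually (eventually_floor_eq_of_irrational hirr)] with z hz
  rw [gaussMap, Int.fract, hz, Pi.sub_apply]

lemma continuousAt_iterate_gaussMap {x : ℝ} (hx : Irrational x) (n : ℕ) :
    ContinuousAt gaussMap^[n] x := by
  induction n with
  | zero => exact continuousAt_id
  | succ n ih =>
    rw [Function.iterate_succ']
    exact ContinuousAt.comp (continuousAt_gaussMap (irrational_iterate_gaussMap hx n)) ih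

lemma eventually_pq_eq_of_irrational {x : ℝ} (hx : Irrational x) (n : ℕ) :
    ∀ᶠ z in 𝓝 x, pq z n = pq x n := by
  have hirr := irrational_iterate_gaussMap hx (n - 1)
  have hcont : ContinuousAt (fun z => 1 / gaussMap^[n - 1] z) x :=
    continuousAt_const.div (continuousAt_iterate_gaussMap hx (n - 1)) hirr.ne_zero
  filter_upwards [hcont.eventually (eventually_floor_eq_of_irrational (by simpa using hirr))]
    with z hz
  rw [pq, pq, ← Int.floor_toNat, ← Int.floor_toNat, hz]

end GaussMap

section Convergents

section PartialQuotients

variable {b : ℕ → ℕ}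

lemma qden_add_two (b : ℕ → ℕ) (n : ℕ) :
    qden b (n + 2) = b (n + 2) * qden b (n + 1) + qden b n := rfl

lemma pnum_add_two (b : ℕ → ℕ) (n : ℕ) :
    pnum b (n + 2) = b (n + 2) * pnum b (n + 1) + pnum b n := rfl

lemma pnum_mul_qden_sub (b : ℕ → ℕ) (n : ℕ) :
    (pnum b (n + 1) : ℤ) * qden b n - pnum b n * qden b (n + 1) = (-1) ^ n := by
  induction n with
  | zero => simp [pnum, qden]
  | succ n ih =>
    rw [qden_add_two, pnum_add_two, pow_succ, ← ih]
    push_cast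
    ring

lemma qden_pos (hb : ∀ n, 1 ≤ b (n + 1)) : ∀ n, 0 < qden b n
  | 0 => one_pos
  | 1 => hb 0
  | n + 2 => Nat.add_pos_right _ (qden_pos hb n)

lemma qden_succ_lt (hb : ∀ n, 1 ≤ b (n + 1)) (n : ℕ) : qden b (n + 1) < qden b (n + 2) := by
  rw [qden_add_two]
  nlinarith [qden_pos hb n, qden_pos hb (n + 1), hb (n + 1)]

lemma qden_mono (hb : ∀ n, 1 ≤ b (n + 1)) : Monotone (qden b) :=
  monotone_nat_of_le_succ fun
    | 0 => hb 0
    | n + 1 => (qden_succ_lt hb n).le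

lemma le_qden (hb : ∀ n, 1 ≤ b (n + 1)) : ∀ n, n ≤ qden b n
  | 0 => Nat.zero_le _
  | 1 => hb 0
  | n + 2 => (le_qden hb (n + 1)).trans_lt (qden_succ_lt hb n)

/- `q_{M-1} / q_M = [b_M, b_{M-1}, …, b_1]`; the last two digits are left out because `b_1` may
be `1`. -/
lemma pq_qden_div_qden (hb : ∀ n, 1 ≤ b (n + 1)) (m k : ℕ) :
    pq ((qden b (m + k + 2) : ℝ) / qden b (m + k + 3)) (k + 1) = b (m + 3) := by
  have hstep (j : ℕ) : (qden b (j + 2) : ℝ) / qden b (j + 3) =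
        1 / (b (j + 3) + (qden b (j + 1) : ℝ) / qden b (j + 2)) ∧
      (qden b (j + 1) : ℝ) / qden b (j + 2) ∈ Ioo (0 : ℝ) 1 := by
    have h₁ : (0 : ℝ) < qden b (j + 1) := by exact_mod_cast qden_pos hb (j + 1)
    have h₂ : (0 : ℝ) < qden b (j + 2) := by exact_mod_cast qden_pos hb (j + 2)
    refine ⟨?_, div_pos h₁ h₂, (div_lt_one h₂).2 (by exact_mod_cast qden_succ_lt hb j)⟩
    rw [qden_add_two b (j + 1)]
    push_cast
    field_simp
  induction k with
  | zero => rw [(hstep m).1, pq_one_div_natCast_add_one _ (hstep m).2]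
  | succ k ih =>
    rw [← ih, (hstep (m + (k + 1))).1, pq_one_div_natCast_add_add_two _ (hstep _).2]
    rfl

end PartialQuotients

variable {α R : ℝ}

lemma nonempty_setOf_lt_qden (hα : α ∈ unitIrrationals) (R : ℝ) :
    {n : ℕ | R < (qden (pq α) n : ℝ)}.Nonempty := by
  obtain ⟨n, hn⟩ := exists_nat_gt R
  exact ⟨n, hn.trans_le (by exact_mod_cast le_qden (one_le_pq_succ hα) n)⟩

lemma nIndex_eq_succ {m : ℕ} (hα : α ∈ unitIrrationals) (hm : (qden (pq α) m : ℝ) ≤ R)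
    (hm' : R < qden (pq α) (m + 1)) : nIndex α R = m + 1 := by
  refine le_antisymm (Nat.sInf_le hm') (Nat.succ_le_of_lt (lt_of_not_ge fun hle => ?_))
  have hlt : R < (qden (pq α) (nIndex α R) : ℝ) := Nat.sInf_mem (nonempty_setOf_lt_qden hα R)
  have hmono : (qden (pq α) (nIndex α R) : ℝ) ≤ qden (pq α) m := by
    exact_mod_cast qden_mono (one_le_pq_succ hα) hle
  linarith

lemma exists_nIndex_eq_succ (hα : α ∈ unitIrrationals) (hR : 1 ≤ R) :
    ∃ m, nIndex α R = m + 1 ∧ (qden (pq α) m : ℝ) ≤ R ∧ R < qden (pq α) (m + 1) := by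
  have hlt : R < (qden (pq α) (nIndex α R) : ℝ) := Nat.sInf_mem (nonempty_setOf_lt_qden hα R)
  obtain ⟨m, hm⟩ : ∃ m, nIndex α R = m + 1 := by
    refine Nat.exists_eq_succ_of_ne_zero fun h => ?_
    rw [h, qden, Nat.cast_one] at hlt
    linarith
  refine ⟨m, hm, le_of_not_gt fun h => ?_, hm ▸ hlt⟩
  have : nIndex α R ≤ m := Nat.sInf_le h
  omega

lemma measurable_qden_pq : ∀ n, Measurable fun α => qden (pq α) n
  | 0 => measurable_const
  | 1 => measurable_pq 1
  | n + 2 => ((measurable_pq _).mul (measurable_qden_pq (n + 1))).add (measurable_qden_pq n)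

lemma qden_mul_sub_pnum_succ (hα : α ∈ unitIrrationals) (m : ℕ) :
    qden (pq α) (m + 1) * α - pnum (pq α) (m + 1) =
      -gaussMap^[m + 1] α * (qden (pq α) m * α - pnum (pq α) m) := by
  induction m with
  | zero =>
    have h := mul_pq_succ_add_iterate_gaussMap hα 0
    simp only [qden, pnum, Function.iterate_zero, id] at h ⊢
    push_cast
    linear_combination h
  | succ m ih =>
    have h := mul_pq_succ_add_iterate_gaussMap hα (m + 1)
    rw [qden_add_two, pnum_add_two]
    push_cast
    linear_combination (pq α (m + 2) + gaussMap^[m + 2] α) * ih -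
      (qden (pq α) m * α - pnum (pq α) m) * h

end Convergents

section ConvergentPairs

/-- The pair `p'/x`, `p/n` consists of unimodular fractions lying on both sides of `α`, the second
one with the smaller error `|n α - p|`. For `0 < x < n` this characterises the pairs of consecutive
convergents of `α`. -/
structure IsConvergentPair (α : ℝ) (x p' n p : ℤ) : Prop where
  det : p * x - p' * n = 1 ∨ p * x - p' * n = -1
  opposite : (x * α - p') * (n * α - p) < 0
  closer : |n * α - p| < |x * α - p'|

variable {α : ℝ} {x p' n p : ℤ}

lemma isConvergentPair_qden (hα : α ∈ unitIrrationals) (m : ℕ) :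
    IsConvergentPair α (qden (pq α) m) (pnum (pq α) m) (qden (pq α) (m + 1))
      (pnum (pq α) (m + 1)) where
  det := by rw [pnum_mul_qden_sub]; exact neg_one_pow_eq_or ℤ m
  opposite := by
    have hne : (qden (pq α) m : ℝ) * α - pnum (pq α) m ≠ 0 :=
      ((hα.2.natCast_mul (qden_pos (one_le_pq_succ hα) m).ne').sub_natCast _).ne_zero
    have ht := (iterate_gaussMap_mem_unitIrrationals hα (m + 1)).1.1
    simp only [Int.cast_natCast]
    rw [qden_mul_sub_pnum_succ hα]
    nlinarith [mul_pos ht (sq_pos_of_ne_zero hne)]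
  closer := by
    have hne : (qden (pq α) m : ℝ) * α - pnum (pq α) m ≠ 0 :=
      ((hα.2.natCast_mul (qden_pos (one_le_pq_succ hα) m).ne').sub_natCast _).ne_zero
    have ht := (iterate_gaussMap_mem_unitIrrationals hα (m + 1)).1
    simp only [Int.cast_natCast]
    rw [qden_mul_sub_pnum_succ hα, abs_mul, abs_neg, abs_of_pos ht.1]
    exact mul_lt_of_lt_one_left (abs_pos.2 hne) ht.2

namespace IsConvergentPair

lemma one_sub (h : IsConvergentPair α x p' n p) :
    IsConvergentPair (1 - α) x (x - p') n (n - p) where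
  det := by
    have e : (n - p) * x - (x - p') * n = -(p * x - p' * n) := by ring
    rw [e, neg_eq_iff_eq_neg, neg_inj]
    exact h.det.symm
  opposite := by
    push_cast
    linarith [h.opposite]
  closer := by
    have h₁ : (n : ℝ) * (1 - α) - (n - p : ℤ) = -(n * α - p) := by push_cast; ring
    have h₂ : (x : ℝ) * (1 - α) - (x - p' : ℤ) = -(x * α - p') := by push_cast; ring
    rw [h₁, h₂, abs_neg, abs_neg]
    exact h.closer

lemma exists_eq_add (h : IsConvergentPair α x p' n p) (q r : ℤ) :
    ∃ i j : ℤ, q = i * x + j * n ∧ r = i * p' + j * p := by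
  rcases h.det with hd | hd
  · exact ⟨q * p - r * n, r * x - q * p', by linear_combination -q * hd,
      by linear_combination -r * hd⟩
  · exact ⟨r * n - q * p, q * p' - r * x, by linear_combination q * hd,
      by linear_combination r * hd⟩

lemma abs_le_abs_of_lt (h : IsConvergentPair α x p' n p) (hx : 0 < x) {q : ℤ} (hq : 0 < q)
    (hqn : q < n) (r : ℤ) : |x * α - p'| ≤ |q * α - r| := by
  obtain ⟨i, j, rfl, rfl⟩ := h.exists_eq_add q r
  have hi : i ≠ 0 := by
    rintro rfl
    rcases le_or_gt j 0 with hj | hj <;> nlinarith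
  have hij : i * j ≤ 0 := by
    by_contra! hpos
    rcases pos_and_pos_or_neg_and_neg_of_mul_pos hpos with ⟨_, _⟩ | ⟨_, _⟩ <;> nlinarith
  have hcross : 0 ≤ (i * j : ℝ) * ((x * α - p') * (n * α - p)) :=
    mul_nonneg_of_nonpos_of_nonpos (by exact_mod_cast hij) h.opposite.le
  have hi' : (1 : ℝ) ≤ (i : ℝ) ^ 2 := by
    exact_mod_cast (one_le_sq_iff_one_le_abs i).2 (Int.one_le_abs hi)
  rw [← sq_le_sq]
  push_cast
  nlinarith [mul_le_mul_of_nonneg_right hi' (sq_nonneg (x * α - p')),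
    sq_nonneg (j * (n * α - p))]

/- With `q_m < n ≤ q_{m+1}`, comparing errors both ways gives `|x α - p'| = |q_m α - p_m|`. -/
lemma exists_qden_eq (h : IsConvergentPair α x p' n p) (hα : α ∈ unitIrrationals) (hx : 0 < x)
    (hxn : x < n) : ∃ m, (qden (pq α) m : ℤ) = x ∧ (qden (pq α) (m + 1) : ℤ) = n := by
  obtain ⟨m, -, hm, hm'⟩ := exists_nIndex_eq_succ (R := n - 1) hα
    (by rw [le_sub_iff_add_le]; exact_mod_cast (by omega : 1 + 1 ≤ n))
  have hm : (qden (pq α) m : ℤ) < n := by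
    rw [le_sub_iff_add_le] at hm
    exact Int.lt_iff_add_one_le.2 (by exact_mod_cast hm)
  have hm' : n ≤ qden (pq α) (m + 1) := by
    rw [sub_lt_iff_lt_add] at hm'
    exact Int.lt_add_one_iff.1 (by exact_mod_cast hm')
  have hpos : (0 : ℤ) < qden (pq α) m := by exact_mod_cast qden_pos (one_le_pq_succ hα) m
  have hconv := isConvergentPair_qden hα m
  have herror := le_antisymm (h.abs_le_abs_of_lt hx hpos hm (pnum (pq α) m))
    (hconv.abs_le_abs_of_lt hpos hx (hxn.trans_le hm') p')
  refine ⟨m, ?_, hm'.antisymm' (le_of_not_gt fun hlt => ?_)⟩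
  · have hne {k l : ℤ} (hk : k ≠ 0) : (k : ℝ) * α ≠ l := (hα.2.intCast_mul hk).ne_int l
    rcases abs_eq_abs.1 herror with heq | heq
    · by_contra hcon
      refine hne (sub_ne_zero.2 hcon) (l := pnum (pq α) m - p') ?_
      push_cast at heq ⊢
      linarith
    · refine absurd ?_ (hne (add_pos hpos hx).ne' (l := pnum (pq α) m + p'))
      push_cast at heq ⊢
      linarith
  · have := hconv.abs_le_abs_of_lt hpos (hx.trans hxn) hlt p
    exact (h.closer.trans_le (herror.le.trans this)).false

end IsConvergentPair

/- `(x α - p') n = x (n α - p) + 1`, so everything is a condition on `n α - p`. -/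
lemma isConvergentPair_iff_mem_Ioo (hx : 0 < x) (hn : 0 < n) (hdet : p * x - p' * n = 1) :
    IsConvergentPair α x p' n p ↔ α ∈ Ioo ((p : ℝ) / n - 1 / (n * (n + x))) (p / n) := by
  have hx' : (0 : ℝ) < x := by exact_mod_cast hx
  have hn' : (0 : ℝ) < n := by exact_mod_cast hn
  have hdet' : (p : ℝ) * x - p' * n = 1 := by exact_mod_cast hdet
  have hmem : α ∈ Ioo ((p : ℝ) / n - 1 / (n * (n + x))) (p / n) ↔
      -1 < (n + x) * (n * α - p) ∧ n * α - p < 0 := by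
    have e : (p : ℝ) / n - 1 / (n * (n + x)) = (p * (n + x) - 1) / (n * (n + x)) := by field_simp
    rw [mem_Ioo, e, div_lt_iff₀ (by positivity), lt_div_iff₀ hn']
    constructor <;> rintro ⟨h₁, h₂⟩ <;> constructor <;> linarith
  have herror : n * (x * α - p') = x * (n * α - p) + 1 := by linear_combination hdet'
  rw [hmem]
  constructor
  · rintro ⟨-, hopp, hclose⟩
    have hneg : n * α - p < 0 := by
      by_contra! h
      nlinarith [mul_nonneg hx'.le h, mul_neg_of_pos_of_neg hn' hopp]
    have hpos : 0 < x * α - p' := pos_of_mul_neg_left hopp hneg.le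
    rw [abs_of_neg hneg, abs_of_pos hpos] at hclose
    exact ⟨by nlinarith [herror], hneg⟩
  · rintro ⟨h₁, h₂⟩
    have hpos : 0 < x * α - p' := by nlinarith [herror]
    refine ⟨.inl hdet, mul_neg_of_pos_of_neg hpos h₂, ?_⟩
    rw [abs_of_neg h₂, abs_of_pos hpos]
    nlinarith [herror]

end ConvergentPairs

section Cells

variable {α R : ℝ} {n x w : ℕ}

/-- For `w` the inverse of `x` modulo `n`, the numbers having consecutive convergents with
denominators `x` and `n`, the latter one being `w / n`. -/
def convergentInterval (n x w : ℕ) : Set ℝ := Ioo ((w : ℝ) / n - 1 / (n * (n + x))) (w / n)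

lemma IsConvergentPair.mem_convergentInterval {p p' : ℤ} (h : IsConvergentPair α x p' n p)
    (hα : α ∈ unitIrrationals) (hx : 0 < x) (hxn : x < n) (hwn : w < n)
    (hwx : (n : ℤ) ∣ w * x - 1) (hdet : p * x - p' * n = 1) : α ∈ convergentInterval n x w := by
  have hmem := (isConvergentPair_iff_mem_Ioo (by exact_mod_cast hx)
    (by exact_mod_cast hx.trans hxn) hdet).1 h
  suffices p = w by simpa [convergentInterval, this] using hmem
  have hn : (0 : ℝ) < n := by exact_mod_cast hx.trans hxn
  have hp : 0 < p := by
    have := (lt_div_iff₀ (by exact_mod_cast hn)).1 hmem.2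
    exact_mod_cast (mul_pos hα.1.1 hn).trans this
  have hpn : p ≤ n := by
    have hlt : (p : ℝ) / n < 1 + 1 / n := by
      have : 1 / ((n : ℝ) * (n + x)) ≤ 1 / n := by
        gcongr
        nlinarith [(by exact_mod_cast hx : (1 : ℝ) ≤ x)]
      have := hmem.1
      push_cast at this
      linarith [hα.1.2]
    rw [div_lt_iff₀ hn, add_mul, one_div_mul_cancel hn.ne', one_mul] at hlt
    exact Int.lt_add_one_iff.1 (by exact_mod_cast hlt)
  have hne : p ≠ n := by
    rintro rfl
    have : (n : ℤ) ∣ 1 := ⟨x - p', by linarith⟩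
    have := Int.le_of_dvd one_pos this
    omega
  have hdvd : (n : ℤ) ∣ p - w := by
    have e : p - w = w * (p' * n) - p * (w * x - 1) := by linear_combination w * hdet
    rw [e]
    exact dvd_sub (Dvd.intro_left _ (mul_assoc _ _ _)) (hwx.mul_left p)
  refine sub_eq_zero.1 (Int.eq_zero_of_abs_lt_dvd hdvd ?_)
  rw [abs_lt]
  omega

lemma one_sub_mem_unitIrrationals (hα : α ∈ unitIrrationals) : 1 - α ∈ unitIrrationals :=
  ⟨⟨sub_pos.2 hα.1.2, sub_lt_self 1 hα.1.1⟩, by simpa using hα.2.natCast_sub 1⟩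

lemma exists_qden_eq_of_mem_convergentInterval (hα : α ∈ unitIrrationals) (hx : 0 < x)
    (hxn : x < n) (hwx : (n : ℤ) ∣ w * x - 1)
    (h : α ∈ convergentInterval n x w ∨ 1 - α ∈ convergentInterval n x w) :
    ∃ m, qden (pq α) m = x ∧ qden (pq α) (m + 1) = n := by
  obtain ⟨p', hp'⟩ := hwx
  have hpair {β : ℝ} (hβ : β ∈ convergentInterval n x w) : IsConvergentPair β x p' n w :=
    (isConvergentPair_iff_mem_Ioo (by exact_mod_cast hx) (by exact_mod_cast hx.trans hxn)
      (by linarith)).2 (by simpa [convergentInterval] using hβ)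
  obtain ⟨q', q, hpair⟩ : ∃ q' q, IsConvergentPair α x q' n q := by
    rcases h with h | h
    · exact ⟨_, _, hpair h⟩
    · exact ⟨_, _, by simpa using (hpair h).one_sub⟩
  simpa using hpair.exists_qden_eq hα (by exact_mod_cast hx) (by exact_mod_cast hxn)

lemma qden_nIndex_iff_mem_convergentInterval (hα : α ∈ unitIrrationals) (hx : 0 < x)
    (hxR : (x : ℝ) ≤ R) (hRn : R < n) (hwn : w < n) (hwx : (n : ℤ) ∣ w * x - 1) :
    (qden (pq α) (nIndex α R) = n ∧ qden (pq α) (nIndex α R - 1) = x) ↔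
      α ∈ convergentInterval n x w ∨ 1 - α ∈ convergentInterval n x w := by
  have hxn : x < n := by exact_mod_cast hxR.trans_lt hRn
  constructor
  · rintro ⟨hn, hx'⟩
    obtain ⟨m, hm, -, -⟩ := exists_nIndex_eq_succ (R := R) hα
      (le_trans (by exact_mod_cast hx) hxR)
    rw [hm] at hn hx'
    subst hn hx'
    have hpair := isConvergentPair_qden hα m
    rcases hpair.det with hdet | hdet
    · exact .inl (hpair.mem_convergentInterval hα hx hxn hwn hwx hdet)
    · exact .inr (hpair.one_sub.mem_convergentInterval (one_sub_mem_unitIrrationals hα) hx hxn hwn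
        hwx (by linear_combination -hdet))
  · intro h
    obtain ⟨m, hm, hm'⟩ := exists_qden_eq_of_mem_convergentInterval hα hx hxn hwx h
    rw [nIndex_eq_succ hα (by rwa [hm]) (by rwa [hm'])]
    exact ⟨hm', hm⟩

end Cells

section GaussDensity

/-- The density of the Gauss measure. -/
noncomputable def gaussDensity (x : ℝ) : ℝ := 1 / (Real.log 2 * (1 + x))

lemma log_two_pos : 0 < Real.log 2 := Real.log_pos one_lt_two

lemma measurable_gaussDensity : Measurable gaussDensity := by
  unfold gaussDensity
  fun_prop

lemma gaussDensity_nonneg {x : ℝ} (hx : 0 ≤ x) : 0 ≤ gaussDensity x := by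
  have := log_two_pos
  unfold gaussDensity
  positivity

lemma gaussDensity_le {x : ℝ} (hx : 0 ≤ x) : gaussDensity x ≤ 1 / Real.log 2 :=
  one_div_le_one_div_of_le log_two_pos (le_mul_of_one_le_right log_two_pos.le (by linarith))

lemma continuousOn_gaussDensity : ContinuousOn gaussDensity (Icc 0 1) :=
  continuousOn_const.div (by fun_prop) fun x hx =>
    (mul_pos log_two_pos (by linarith [hx.1])).ne'

lemma integrableOn_gaussDensity : IntegrableOn gaussDensity (Ioo 0 1) :=
  (continuousOn_gaussDensity.integrableOn_compact isCompact_Icc).mono_set Ioo_subset_Icc_self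

lemma integral_gaussDensity : ∫ x in (0 : ℝ)..1, gaussDensity x = 1 := by
  have h (x : ℝ) : gaussDensity x = (Real.log 2)⁻¹ * (x + 1)⁻¹ := by
    rw [gaussDensity, one_div, mul_inv, add_comm]
  simp_rw [h]
  rw [intervalIntegral.integral_const_mul, intervalIntegral.integral_comp_add_right (·⁻¹),
    integral_inv_of_pos (by norm_num) (by norm_num)]
  norm_num [log_two_pos.ne']

lemma gaussMeasure_eq_withDensity : gaussMeasure =
    (volume.restrict (Ioo (0 : ℝ) 1)).withDensity fun x => ENNReal.ofReal (gaussDensity x) := rfl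

lemma integral_gaussMeasure (f : ℝ → ℝ) :
    ∫ x, f x ∂gaussMeasure = ∫ x in Ioo (0 : ℝ) 1, gaussDensity x * f x := by
  rw [gaussMeasure_eq_withDensity, integral_withDensity_eq_integral_toReal_smul
    measurable_gaussDensity.ennreal_ofReal (ae_of_all _ fun x => ENNReal.ofReal_lt_top)]
  refine setIntegral_congr_fun measurableSet_Ioo fun x hx => ?_
  simp only [ENNReal.toReal_ofReal (gaussDensity_nonneg hx.1.le), smul_eq_mul]

lemma absolutelyContinuous_gaussMeasure : gaussMeasure ≪ volume :=
  (withDensity_absolutelyContinuous _ _).trans Measure.restrict_le_self.absolutelyContinuous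

instance : IsFiniteMeasure gaussMeasure :=
  isFiniteMeasure_withDensity_ofReal integrableOn_gaussDensity.2

lemma measureReal_gaussMeasure {s : Set ℝ} (hs : MeasurableSet s) :
    gaussMeasure.real s = ∫ x in Ioo (0 : ℝ) 1, s.indicator gaussDensity x := by
  rw [← integral_indicator_one hs, integral_gaussMeasure]
  congr 1 with x
  by_cases hx : x ∈ s <;> simp [hx]

instance : IsProbabilityMeasure gaussMeasure := by
  rw [isProbabilityMeasure_iff_real, measureReal_gaussMeasure .univ, indicator_univ,
    ← integral_Ioc_eq_integral_Ioo, ← intervalIntegral.integral_of_le zero_le_one,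
    integral_gaussDensity]

lemma ae_mem_unitIrrationals : ∀ᵐ x ∂gaussMeasure, x ∈ unitIrrationals := by
  have hirr : ∀ᵐ x : ℝ, Irrational x := (countable_range ((↑) : ℚ → ℝ)).ae_notMem volume
  filter_upwards [absolutelyContinuous_gaussMeasure hirr,
    (withDensity_absolutelyContinuous _ _) (ae_restrict_mem measurableSet_Ioo)] with x hx h01
  exact ⟨h01, hx⟩

end GaussDensity

section CellAverage

variable {C : Set ℝ}

/-- An approximation of `n² / φ(n)` times the Gauss mass of the numbers for which `n` is the first
denominator exceeding `s n` and the previous denominator `x` satisfies `x / n ∈ C`: each `x`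
contributes `(1 + x / n)⁻¹` times the sum of the Gauss densities at the two fractions `± x⁻¹ / n`
modulo `1`. -/
noncomputable def cellAverage (C : Set ℝ) (n : ℕ) (s : ℝ) : ℝ :=
  unitAverage n fun x w => (C ∩ Iic s).indicator (fun u => 1 / (1 + u)) x *
    (gaussDensity w + gaussDensity (1 - w))

lemma continuousAt_indicator_of_notMem_frontier {X : Type*} [TopologicalSpace X] {s : Set X}
    {f : X → ℝ} {x : X} (hx : x ∉ frontier s) (hf : ContinuousAt f x) :
    ContinuousAt (s.indicator f) x := by
  by_cases h : x ∈ interior s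
  · refine hf.congr ?_
    filter_upwards [mem_interior_iff_mem_nhds.1 h] with z hz
    rw [indicator_of_mem hz]
  · refine (continuousAt_const (y := (0 : ℝ))).congr ?_
    have hc : x ∉ closure s := fun hc => hx ⟨hc, h⟩
    filter_upwards [isClosed_closure.compl_mem_nhds hc] with z hz
    rw [indicator_of_notMem fun hs => hz (subset_closure hs)]

lemma integral_indicator_one_div_one_add (hC : MeasurableSet C) :
    ∫ x in (0 : ℝ)..1, C.indicator (fun u => 1 / (1 + u)) x =
      Real.log 2 * gaussMeasure.real C := by
  rw [measureReal_gaussMeasure hC, intervalIntegral.integral_of_le zero_le_one,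
    integral_Ioc_eq_integral_Ioo, ← integral_const_mul]
  congr 1 with x
  by_cases hx : x ∈ C
  · rw [indicator_of_mem hx, indicator_of_mem hx, gaussDensity, one_div, one_div, mul_inv,
      mul_inv_cancel_left₀ log_two_pos.ne']
  · rw [indicator_of_notMem hx, indicator_of_notMem hx, mul_zero]

lemma integral_gaussDensity_add_gaussDensity_one_sub :
    ∫ w in (0 : ℝ)..1, (gaussDensity w + gaussDensity (1 - w)) = 2 := by
  have hinteg : IntervalIntegrable gaussDensity volume 0 1 := by
    refine ContinuousOn.intervalIntegrable ?_
    simpa using continuousOn_gaussDensity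
  rw [intervalIntegral.integral_add hinteg (by simpa using (hinteg.comp_sub_left 1).symm),
    intervalIntegral.integral_comp_sub_left gaussDensity]
  simp only [sub_self, sub_zero, integral_gaussDensity]
  norm_num

lemma tendsto_cellAverage (hC : MeasurableSet C) (hC' : volume (frontier C) = 0) (s : ℝ) :
    Tendsto (fun n => cellAverage C n s) atTop
      (𝓝 (2 * Real.log 2 * gaussMeasure.real (C ∩ Iic s))) := by
  have hCs : MeasurableSet (C ∩ Iic s) := hC.inter measurableSet_Iic
  have hfrontier : volume (frontier (C ∩ Iic s)) = 0 := null_frontier_inter hC' (by simp)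
  have h := tendsto_unitAverage_mul (A := 1) (B := 1 / Real.log 2 + 1 / Real.log 2)
    (F := (C ∩ Iic s).indicator fun u => 1 / (1 + u))
    (G := fun w => gaussDensity w + gaussDensity (1 - w))
    (Measurable.indicator (by fun_prop) hCs)
    (measurable_gaussDensity.add (measurable_gaussDensity.comp (by fun_prop)))
    (fun x hx => ?_) (fun w hw => ?_) ?_ (ae_of_all _ fun w hw => ?_)
  · convert h using 2
    · rfl
    rw [integral_indicator_one_div_one_add hCs, integral_gaussDensity_add_gaussDensity_one_sub]
    ring
  · have hx' := hx.1
    rw [← Real.norm_eq_abs]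
    refine (norm_indicator_le_norm_self _ _).trans ?_
    rw [Real.norm_eq_abs, abs_of_nonneg (by positivity)]
    exact div_le_one_of_le₀ (by linarith) (by linarith)
  · have h₁ : 0 ≤ 1 - w := by linarith [hw.2]
    rw [abs_of_nonneg (add_nonneg (gaussDensity_nonneg hw.1) (gaussDensity_nonneg h₁))]
    exact add_le_add (gaussDensity_le hw.1) (gaussDensity_le h₁)
  · filter_upwards [measure_eq_zero_iff_ae_notMem.1 hfrontier] with x hx hx01
    exact continuousAt_indicator_of_notMem_frontier hx
      (continuousAt_const.div (by fun_prop) (by linarith [hx01.1]))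
  · have hcont {v : ℝ} (hv : v ∈ Ioo (0 : ℝ) 1) : ContinuousAt gaussDensity v :=
      continuousOn_gaussDensity.continuousAt (Icc_mem_nhds hv.1 hv.2)
    exact (hcont hw).add ((hcont ⟨by linarith [hw.2], by linarith [hw.1]⟩).comp' (by fun_prop))

lemma unitAverage_mono {F G : ℝ → ℝ → ℝ}
    (h : ∀ x ∈ Ico (0 : ℝ) 1, ∀ w ∈ Ico (0 : ℝ) 1, F x w ≤ G x w) (n : ℕ) :
    unitAverage n F ≤ unitAverage n G := by
  refine div_le_div_of_nonneg_right (Finset.sum_le_sum fun x hx => ?_) n.totient.cast_nonneg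
  have hxn : x < n := Finset.mem_range.1 (Finset.mem_filter.1 hx).1
  have hn : (0 : ℝ) < n := by exact_mod_cast hxn.pos
  have : NeZero n := ⟨hxn.ne_bot⟩
  have hmem {k : ℕ} (hk : k < n) : (k : ℝ) / n ∈ Ico (0 : ℝ) 1 :=
    ⟨by positivity, (div_lt_one hn).2 (by exact_mod_cast hk)⟩
  exact h _ (hmem hxn) _ (hmem (ZMod.val_lt _))

lemma gaussDensity_add_gaussDensity_one_sub_nonneg {w : ℝ} (hw : w ∈ Ico (0 : ℝ) 1) :
    0 ≤ gaussDensity w + gaussDensity (1 - w) :=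
  add_nonneg (gaussDensity_nonneg hw.1) (gaussDensity_nonneg (sub_pos.2 hw.2).le)

lemma monotone_cellAverage (C : Set ℝ) (n : ℕ) : Monotone (cellAverage C n) := by
  intro s t hst
  refine unitAverage_mono (fun x hx w hw => ?_) n
  refine mul_le_mul_of_nonneg_right ?_ (gaussDensity_add_gaussDensity_one_sub_nonneg hw)
  exact indicator_le_indicator_apply_of_subset
    (inter_subset_inter_right C (Iic_subset_Iic.2 hst)) (one_div_nonneg.2 (by linarith [hx.1]))

lemma cellAverage_nonneg (C : Set ℝ) (n : ℕ) (s : ℝ) : 0 ≤ cellAverage C n s := by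
  have h := unitAverage_mono (F := 0) (fun x hx w hw => mul_nonneg
    (indicator_apply_nonneg (s := C ∩ Iic s) (f := fun u => 1 / (1 + u)) fun _ =>
      one_div_nonneg.2 (by linarith [hx.1])) (gaussDensity_add_gaussDensity_one_sub_nonneg hw)) n
  simpa [cellAverage, unitAverage] using h

theorem tendsto_sum_cellAverage (hC : MeasurableSet C) (hC' : volume (frontier C) = 0) {a b : ℝ}
    (ha : 0 < a) (hab : a < b) :
    Tendsto (fun R : ℝ => ∑ n ∈ Finset.Ioo ⌊a * R⌋₊ ⌈b * R⌉₊,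
        (n.totient : ℝ) / n ^ 2 * cellAverage C n (R / n)) atTop
      (𝓝 (12 * Real.log 2 / Real.pi ^ 2 *
        ∫ v in a..b, gaussMeasure.real (C ∩ Iic (1 / v)) / v)) := by
  have h := tendsto_sum_Ioo_floor_ceil_mul_div (c := fun n => (n.totient : ℝ) / n) (B := 1)
    (f := fun n v => cellAverage C n (1 / v) / v)
    (g := fun v => 2 * Real.log 2 * gaussMeasure.real (C ∩ Iic (1 / v)) / v)
    (fun n => by positivity)
    (fun n => div_le_one_of_le₀ (by exact_mod_cast n.totient_le) n.cast_nonneg)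
    tendsto_mean_totient_div ha hab (fun n u hu v _ huv => ?_)
    (fun v _ => (tendsto_cellAverage hC hC' _).div_const v)
  · have hconst : 6 / Real.pi ^ 2 *
          ∫ v in a..b, 2 * Real.log 2 * gaussMeasure.real (C ∩ Iic (1 / v)) / v =
        12 * Real.log 2 / Real.pi ^ 2 *
          ∫ v in a..b, gaussMeasure.real (C ∩ Iic (1 / v)) / v := by
      simp_rw [mul_div_assoc (2 * Real.log 2)]
      rw [intervalIntegral.integral_const_mul]
      ring
    rw [← hconst]
    refine h.congr' ?_
    filter_upwards [eventually_gt_atTop 0] with R hR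
    rw [Finset.sum_div]
    refine Finset.sum_congr rfl fun n _ => ?_
    rw [one_div_div, div_div_eq_mul_div]
    field_simp
  · have hu' : 0 < u := ha.trans_le hu.1
    exact div_le_div₀ (cellAverage_nonneg _ _ _)
      (monotone_cellAverage C n (one_div_le_one_div_of_le hu' huv)) hu' huv

end CellAverage

section NaturalExtension

lemma measurableSet_irrational : MeasurableSet {x : ℝ | Irrational x} :=
  (countable_range ((↑) : ℚ → ℝ)).measurableSet.compl

lemma measurableSet_unitIrrationals : MeasurableSet unitIrrationals :=
  measurableSet_Ioo.inter measurableSet_irrational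

lemma Dset_eq_prod : Dset = unitIrrationals ×ˢ unitIrrationals := by
  ext p
  simp only [Dset, unitIrrationals, mem_prod, mem_ofPred_eq, and_assoc]

lemma restrict_unitIrrationals : volume.restrict unitIrrationals = volume.restrict (Ioo 0 1) := by
  refine Measure.restrict_congr_set ?_
  filter_upwards [(countable_range ((↑) : ℚ → ℝ)).ae_notMem volume] with x hx
  exact propext ⟨fun h => h.1, fun h => ⟨h, hx⟩⟩

lemma mu2_eq_withDensity : mu2 =
    ((volume.restrict (Ioo (0 : ℝ) 1)).prod (volume.restrict (Ioo (0 : ℝ) 1))).withDensity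
      fun p => ENNReal.ofReal (1 / (Real.log 2 * (1 + p.1 * p.2) ^ 2)) := by
  rw [mu2, Dset_eq_prod, Measure.volume_eq_prod, ← Measure.prod_restrict, restrict_unitIrrationals]

lemma ae_mem_Dset : ∀ᵐ p ∂mu2, p ∈ Dset := by
  have hD : MeasurableSet Dset :=
    Dset_eq_prod ▸ measurableSet_unitIrrationals.prod measurableSet_unitIrrationals
  exact (withDensity_absolutelyContinuous _ _).ae_le (ae_restrict_mem hD)

lemma measurable_fst_GhatMap : Measurable fun p => (GhatMap p).1 := by
  have h : Measurable fun p : ℝ × ℝ => ((⌊1 / p.2⌋ : ℤ) : ℝ) :=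
    measurable_from_top.comp (Int.measurable_floor.comp (by fun_prop))
  exact (h.add measurable_fst).const_div 1

/-- The interval of those `y` with `⌊1 / y⌋ = c + 1`. -/
def floorFiber (c : ℕ) : Set ℝ := Ioc (1 / (c + 2)) (1 / (c + 1))

lemma mem_floorFiber_iff {c : ℕ} {y : ℝ} (hy : 0 < y) : y ∈ floorFiber c ↔ ⌊1 / y⌋ = c + 1 := by
  rw [floorFiber, mem_Ioc, one_div_lt (by positivity) hy, le_one_div hy (by positivity),
    Int.floor_eq_iff, and_comm]
  push_cast
  rw [add_assoc, one_add_one_eq_two]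

lemma pos_of_mem_floorFiber {c : ℕ} {y : ℝ} (hy : y ∈ floorFiber c) : 0 < y :=
  lt_trans (by positivity) hy.1

lemma pairwise_disjoint_floorFiber : Pairwise (Function.onFun Disjoint floorFiber) := by
  intro c d hcd
  refine Set.disjoint_left.2 fun y hc hd => hcd ?_
  have hy := pos_of_mem_floorFiber hc
  have := ((mem_floorFiber_iff hy).1 hc).symm.trans ((mem_floorFiber_iff hy).1 hd)
  exact_mod_cast add_right_cancel this

lemma iUnion_floorFiber : ⋃ c, floorFiber c = Ioc 0 1 := by
  ext y
  refine ⟨fun hy => ?_, fun ⟨h0, h1⟩ => mem_iUnion.2 ?_⟩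
  · obtain ⟨c, hc⟩ := mem_iUnion.1 hy
    exact ⟨pos_of_mem_floorFiber hc, hc.2.trans (div_le_one_of_le₀ (by simp) (by positivity))⟩
  · have hfloor : 1 ≤ ⌊1 / y⌋ := Int.le_floor.2 (by simpa using one_le_one_div h0 h1)
    refine ⟨(⌊1 / y⌋ - 1).toNat, (mem_floorFiber_iff h0).2 ?_⟩
    omega

lemma lintegral_Ioo_eq_tsum_floorFiber (F : ℝ → ENNReal) :
    ∫⁻ y in Ioo (0 : ℝ) 1, F y = ∑' c, ∫⁻ y in floorFiber c, F y := by
  have hmeas (c : ℕ) : MeasurableSet (floorFiber c) := measurableSet_Ioc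
  rw [setLIntegral_congr Ioo_ae_eq_Ioc, ← iUnion_floorFiber,
    lintegral_iUnion hmeas pairwise_disjoint_floorFiber]

lemma lintegral_floorFiber_mu2_density (c : ℕ) {x : ℝ} (hx : 0 < x) :
    ∫⁻ y in floorFiber c, ENNReal.ofReal (1 / (Real.log 2 * (1 + x * y) ^ 2)) =
      ENNReal.ofReal (1 / (Real.log 2 * ((c + 1 + x) * (c + 2 + x)))) := by
  have := log_two_pos
  have hle : 1 / ((c : ℝ) + 2) ≤ 1 / (c + 1) := by gcongr; norm_num
  have hpos {y : ℝ} (hy : y ∈ Icc (1 / ((c : ℝ) + 2)) (1 / (c + 1))) : 0 < y :=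
    lt_of_lt_of_le (by positivity) hy.1
  have hcont : ContinuousOn (fun y => 1 / (Real.log 2 * (1 + x * y) ^ 2))
      (Icc (1 / ((c : ℝ) + 2)) (1 / (c + 1))) := by
    refine continuousOn_const.div (by fun_prop) fun y hy => ?_
    have := hpos hy
    positivity
  have hderiv (y : ℝ) (hy : y ∈ uIcc (1 / ((c : ℝ) + 2)) (1 / (c + 1))) :
      HasDerivAt (fun y => (Real.log 2)⁻¹ * (y / (1 + x * y)))
        (1 / (Real.log 2 * (1 + x * y) ^ 2)) y := by
    have hy0 := hpos (uIcc_of_le hle ▸ hy)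
    have hden : HasDerivAt (fun y : ℝ => 1 + x * y) x y := by
      simpa using ((hasDerivAt_id y).const_mul x).const_add 1
    refine (((hasDerivAt_id y).div hden (by positivity)).const_mul _).congr_deriv ?_
    simp only [id]
    field_simp
    ring
  rw [floorFiber, ← ofReal_integral_eq_lintegral_ofReal
    ((hcont.integrableOn_compact isCompact_Icc).mono_set Ioc_subset_Icc_self)
    (ae_of_all _ fun y => by positivity), ← intervalIntegral.integral_of_le hle,
    intervalIntegral.integral_eq_sub_of_hasDerivAt hderiv
      (hcont.intervalIntegrable_of_Icc hle)]
  congr 1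
  field_simp
  ring

lemma image_one_div_add_Ioo (c : ℕ) : (fun x : ℝ => 1 / (c + 1 + x)) '' Ioo 0 1 =
    Ioo (1 / ((c : ℝ) + 2)) (1 / (c + 1)) := by
  ext u
  constructor
  · rintro ⟨x, ⟨h0, h1⟩, rfl⟩
    exact ⟨one_div_lt_one_div_of_lt (by positivity) (by linarith),
      one_div_lt_one_div_of_lt (by positivity) (by linarith)⟩
  · rintro ⟨h1, h2⟩
    have hu : 0 < u := lt_trans (by positivity) h1
    have h1' := (one_div_lt (by positivity) hu).1 h1
    have h2' := (lt_one_div hu (by positivity)).1 h2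
    exact ⟨1 / u - (c + 1), ⟨by linarith, by linarith⟩, by simp⟩

lemma lintegral_floorFiber_gaussDensity (c : ℕ) (f : ℝ → ENNReal) :
    ∫⁻ u in floorFiber c, ENNReal.ofReal (gaussDensity u) * f u =
      ∫⁻ x in Ioo (0 : ℝ) 1, ENNReal.ofReal (1 / (Real.log 2 * ((c + 1 + x) * (c + 2 + x)))) *
        f (1 / (c + 1 + x)) := by
  have := log_two_pos
  have hderiv (x : ℝ) (hx : x ∈ Ioo (0 : ℝ) 1) : HasDerivWithinAt
      (fun x : ℝ => 1 / (c + 1 + x)) (-1 / (c + 1 + x) ^ 2) (Ioo 0 1) x := by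
    have := hx.1
    simp only [one_div]
    exact (((hasDerivAt_id x).const_add _).inv (by positivity)).hasDerivWithinAt
  have hinj : InjOn (fun x : ℝ => 1 / (c + 1 + x)) (Ioo 0 1) := fun x _ y _ h => by
    simpa using h
  rw [floorFiber, ← setLIntegral_congr Ioo_ae_eq_Ioc, ← image_one_div_add_Ioo,
    lintegral_image_eq_lintegral_abs_deriv_mul measurableSet_Ioo hderiv hinj]
  refine setLIntegral_congr_fun measurableSet_Ioo fun x hx => ?_
  have := hx.1
  rw [← mul_assoc, ← ENNReal.ofReal_mul (abs_nonneg _)]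
  congr 2
  rw [neg_div, abs_neg, abs_of_nonneg (by positivity), gaussDensity]
  field_simp
  ring

lemma lintegral_comp_fst_GhatMap {f : ℝ → ENNReal} (hf : Measurable f) :
    ∫⁻ p, f (GhatMap p).1 ∂mu2 = ∫⁻ u, f u ∂gaussMeasure := by
  have hdens : Measurable fun p : ℝ × ℝ =>
      ENNReal.ofReal (1 / (Real.log 2 * (1 + p.1 * p.2) ^ 2)) := by fun_prop
  have hcomp : Measurable fun p => f (GhatMap p).1 := hf.comp measurable_fst_GhatMap
  rw [mu2_eq_withDensity,
    lintegral_withDensity_eq_lintegral_mul₀ hdens.aemeasurable hcomp.aemeasurable,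
    lintegral_prod _ (hdens.mul hcomp).aemeasurable, gaussMeasure_eq_withDensity,
    lintegral_withDensity_eq_lintegral_mul _ measurable_gaussDensity.ennreal_ofReal hf]
  simp only [Pi.mul_apply]
  rw [lintegral_Ioo_eq_tsum_floorFiber (fun u => ENNReal.ofReal (gaussDensity u) * f u),
    tsum_congr fun c => lintegral_floorFiber_gaussDensity c f,
    ← lintegral_tsum fun c => by fun_prop]
  refine setLIntegral_congr_fun measurableSet_Ioo fun x hx => ?_
  rw [lintegral_Ioo_eq_tsum_floorFiber]
  refine tsum_congr fun c => ?_
  rw [← lintegral_floorFiber_mu2_density c hx.1, ← lintegral_mul_const _ (by fun_prop)]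
  refine setLIntegral_congr_fun measurableSet_Ioc fun y hy => ?_
  have hy' : ⌊1 / y⌋ = c + 1 := (mem_floorFiber_iff (pos_of_mem_floorFiber hy)).1 hy
  simp only [GhatMap, hy']
  push_cast
  rfl

lemma map_fst_GhatMap_mu2 : mu2.map (fun p => (GhatMap p).1) = gaussMeasure := by
  ext s hs
  have h1 : Measurable (s.indicator (1 : ℝ → ENNReal)) := measurable_one.indicator hs
  rw [← lintegral_indicator_one hs, ← lintegral_indicator_one hs,
    lintegral_map h1 measurable_fst_GhatMap, lintegral_comp_fst_GhatMap h1]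

lemma roof_eq_neg_log (p : ℝ × ℝ) : roof p = -Real.log (GhatMap p).1 := by
  rw [roof, GhatMap, one_div (_ + _), Real.log_inv, neg_neg]

end NaturalExtension

section LevyConstant

lemma intervalIntegrable_pow_mul_log (k : ℕ) :
    IntervalIntegrable (fun u : ℝ => u ^ k * Real.log u) volume 0 1 :=
  intervalIntegral.intervalIntegrable_log'.continuousOn_mul (by fun_prop)

lemma integral_pow_mul_log (k : ℕ) :
    ∫ u in (0 : ℝ)..1, u ^ k * Real.log u = -1 / (k + 1) ^ 2 := by
  have hderiv (u : ℝ) (hu : u ∈ Ioo (0 : ℝ) 1) : HasDerivAt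
      (fun u => (u ^ k * (u * Real.log u) - u ^ (k + 1) / (k + 1)) / (k + 1))
      (u ^ k * Real.log u) u := by
    have hu0 : u ≠ 0 := hu.1.ne'
    have h := (((hasDerivAt_pow k u).mul (Real.hasDerivAt_mul_log hu0)).sub
      ((hasDerivAt_pow (k + 1) u).div_const ((k : ℝ) + 1))).div_const ((k : ℝ) + 1)
    refine h.congr_deriv ?_
    rcases k with _ | k
    · simp
    · push_cast
      field_simp
      ring
  rw [intervalIntegral.integral_eq_sub_of_hasDerivAt_of_le zero_le_one ?_ hderiv
    (intervalIntegrable_pow_mul_log k)]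
  · simp
    field_simp
  · have := Real.continuous_mul_log
    fun_prop

lemma eval_bernoulli_two_one_half :
    (Polynomial.map (algebraMap ℚ ℝ) (Polynomial.bernoulli 2)).eval (1 / 2) = -1 / 12 := by
  norm_num [Polynomial.bernoulli_def, Finset.sum_range_succ, bernoulli_two]

lemma hasSum_neg_one_pow_div_sq :
    HasSum (fun k : ℕ => (-1 : ℝ) ^ k / (k + 1) ^ 2) (Real.pi ^ 2 / 12) := by
  have h := (hasSum_one_div_nat_pow_mul_cos one_ne_zero (x := 1 / 2) (by norm_num)).neg
  rw [mul_one, eval_bernoulli_two_one_half] at h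
  convert! (hasSum_nat_add_iff' 1).2 h using 1
  · ext k
    have hangle : 2 * Real.pi * ((k + 1 : ℕ) : ℝ) * (1 / 2) = (k + 1 : ℕ) * Real.pi := by ring
    rw [hangle, Real.cos_nat_mul_pi]
    push_cast
    ring
  · simp [Nat.factorial]
    ring

lemma integral_log_div_one_add :
    ∫ u in Ioo (0 : ℝ) 1, Real.log u / (1 + u) = -(Real.pi ^ 2 / 12) := by
  have hinteg (k : ℕ) : Integrable (fun u : ℝ => u ^ k * Real.log u)
      (volume.restrict (Ioo (0 : ℝ) 1)) :=
    ((intervalIntegrable_iff_integrableOn_Ioc_of_le zero_le_one).1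
      (intervalIntegrable_pow_mul_log k)).mono_set Ioo_subset_Ioc_self
  have hval (k : ℕ) : ∫ u in Ioo (0 : ℝ) 1, u ^ k * Real.log u = -1 / (k + 1) ^ 2 := by
    rw [← integral_pow_mul_log k, intervalIntegral.integral_of_le zero_le_one,
      integral_Ioc_eq_integral_Ioo]
  have hnorm (k : ℕ) : ∫ u in Ioo (0 : ℝ) 1, ‖(-1) ^ k * (u ^ k * Real.log u)‖ =
      1 / ((k : ℝ) + 1) ^ 2 := by
    rw [← neg_neg (1 / ((k : ℝ) + 1) ^ 2), ← neg_div, ← hval k, ← integral_neg]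
    refine setIntegral_congr_fun measurableSet_Ioo fun u hu => ?_
    have hneg : u ^ k * Real.log u ≤ 0 :=
      mul_nonpos_of_nonneg_of_nonpos (pow_nonneg hu.1.le k) (Real.log_nonpos hu.1.le hu.2.le)
    simp only [norm_mul, norm_pow, norm_neg, norm_one, one_pow, one_mul]
    rw [← norm_pow, ← norm_mul, Real.norm_of_nonpos hneg]
  have hsummable : Summable fun k : ℕ => 1 / ((k : ℝ) + 1) ^ 2 := by
    simpa using (summable_nat_add_iff 1).2 hasSum_zeta_two.summable
  have h := hasSum_integral_of_summable_integral_norm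
    (fun k => (hinteg k).const_mul ((-1 : ℝ) ^ k)) (by simpa only [hnorm] using hsummable)
  have hterm (k : ℕ) : (-1 : ℝ) ^ k * (-1 / (k + 1) ^ 2) = -((-1) ^ k / (k + 1) ^ 2) := by ring
  simp only [integral_const_mul, hval, hterm] at h
  rw [← h.unique hasSum_neg_one_pow_div_sq.neg]
  refine setIntegral_congr_fun measurableSet_Ioo fun u hu => ?_
  have hgeom := hasSum_geometric_of_abs_lt_one (r := -u)
    (by rw [abs_neg, abs_of_pos hu.1]; exact hu.2)
  have hpow (k : ℕ) : (-1) ^ k * (u ^ k * Real.log u) = (-u) ^ k * Real.log u := by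
    rw [neg_pow u k, mul_assoc]
  simp only [hpow]
  rw [(hgeom.mul_right _).tsum_eq, sub_neg_eq_add, div_eq_inv_mul]

theorem integral_roof : ∫ p, roof p ∂mu2 = Real.pi ^ 2 / (12 * Real.log 2) := by
  have hinteg : ∫ p, roof p ∂mu2 = ∫ u, -Real.log u ∂gaussMeasure := by
    have hlog : Measurable fun u => -Real.log u := Real.measurable_log.neg
    simp only [roof_eq_neg_log]
    rw [← map_fst_GhatMap_mu2, integral_map measurable_fst_GhatMap.aemeasurable
      hlog.aestronglyMeasurable]
  have hdens (u : ℝ) : gaussDensity u * -Real.log u =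
      -(Real.log 2)⁻¹ * (Real.log u / (1 + u)) := by
    rw [gaussDensity, one_div, mul_inv]
    ring
  rw [hinteg, integral_gaussMeasure]
  simp only [hdens]
  rw [integral_const_mul, integral_log_div_one_add]
  ring

end LevyConstant

section LimitIntegral

lemma integral_indicator_Iic_one_div {a b u : ℝ} (ha : 0 < a) (hab : a ≤ b) (hu : 0 < u) :
    ∫ v in Ioc a b, (Iic (1 / v)).indicator (fun _ => 1 / v) u =
      max 0 (-Real.log u - Real.log a) - max 0 (-Real.log u - Real.log b) := by
  have hu' : 0 < 1 / u := one_div_pos.2 hu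
  have hset : Ioc a b ∩ Iic (1 / u) = Ioc a (min b (1 / u)) := by
    rw [← Ioi_inter_Iic, inter_assoc, Iic_inter_Iic, Ioi_inter_Iic]
  have hind : ∫ v in Ioc a b, (Iic (1 / v)).indicator (fun _ => 1 / v) u =
      ∫ v in Ioc a (min b (1 / u)), 1 / v := by
    rw [← hset, ← setIntegral_indicator measurableSet_Iic]
    refine setIntegral_congr_fun measurableSet_Ioc fun v hv => ?_
    simp only [indicator_apply, mem_Iic, le_one_div hu (ha.trans hv.1)]
  have hlog : -Real.log u = Real.log (1 / u) := by rw [one_div, Real.log_inv]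
  have hlogb := Real.log_le_log ha hab
  rw [hind, hlog]
  rcases le_total (1 / u) a with h | h
  · have hloga := Real.log_le_log hu' h
    rw [Ioc_eq_empty (not_lt.2 ((min_le_right _ _).trans h)), max_eq_left (by linarith),
      max_eq_left (by linarith)]
    simp
  · have hm : a ≤ min b (1 / u) := le_min hab h
    have hloga := Real.log_le_log ha h
    rw [← intervalIntegral.integral_of_le hm, integral_one_div_of_pos ha (ha.trans_le hm),
      Real.log_div (ha.trans_le hm).ne' ha.ne', max_eq_right (sub_nonneg.2 hloga)]
    rcases le_total b (1 / u) with hb | hb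
    · rw [min_eq_left hb, max_eq_right (sub_nonneg.2 (Real.log_le_log (ha.trans_le hab) hb))]
      ring
    · rw [min_eq_right hb, max_eq_left (sub_nonpos.2 (Real.log_le_log hu' hb))]
      ring

lemma integral_measureReal_gaussMeasure_div {C : Set ℝ} {a b : ℝ} (ha : 0 < a) (hab : a ≤ b) :
    ∫ v in a..b, gaussMeasure.real (C ∩ Iic (1 / v)) / v =
      ∫ u in C, (max 0 (-Real.log u - Real.log a) - max 0 (-Real.log u - Real.log b))
        ∂gaussMeasure := by
  let f (v u : ℝ) : ℝ := (Iic (1 / v)).indicator (fun _ => 1 / v) u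
  have hmeas : Measurable (Function.uncurry f) := by
    have hset : MeasurableSet {p : ℝ × ℝ | p.2 ≤ 1 / p.1} :=
      measurableSet_le measurable_snd (by fun_prop)
    exact (by fun_prop : Measurable fun p : ℝ × ℝ => 1 / p.1).indicator hset
  have hinteg : Integrable (Function.uncurry f)
      ((volume.restrict (Ioc a b)).prod (gaussMeasure.restrict C)) := by
    refine Integrable.of_bound hmeas.aestronglyMeasurable (1 / a) ?_
    filter_upwards [Measure.quasiMeasurePreserving_fst.ae (ae_restrict_mem measurableSet_Ioc)]
      with p hp
    refine (norm_indicator_le_norm_self (fun _ => 1 / p.1) _).trans ?_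
    rw [Real.norm_of_nonneg (one_div_nonneg.2 (ha.trans hp.1).le)]
    exact one_div_le_one_div_of_le ha hp.1.le
  calc ∫ v in a..b, gaussMeasure.real (C ∩ Iic (1 / v)) / v
      = ∫ v in Ioc a b, ∫ u in C, f v u ∂gaussMeasure := by
        rw [intervalIntegral.integral_of_le hab]
        refine integral_congr_ae (ae_of_all _ fun v => ?_)
        simp only [f]
        rw [setIntegral_indicator measurableSet_Iic, setIntegral_const, smul_eq_mul, mul_one_div]
    _ = ∫ u in C, (∫ v in Ioc a b, f v u) ∂gaussMeasure := integral_integral_swap hinteg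
    _ = _ := by
        refine integral_congr_ae (ae_restrict_of_ae ?_)
        filter_upwards [ae_mem_unitIrrationals] with u hu
        exact integral_indicator_Iic_one_div ha hab hu.1.1

theorem mul_integral_measureReal_gaussMeasure_div {C : Set ℝ} (hC : MeasurableSet C) {a b : ℝ}
    (ha : 0 < a) (hab : a ≤ b) :
    12 * Real.log 2 / Real.pi ^ 2 * ∫ v in a..b, gaussMeasure.real (C ∩ Iic (1 / v)) / v =
      (∫ p, roof p ∂mu2)⁻¹ * ∫ p in {p | (GhatMap p).1 ∈ C},
        (max 0 (roof p - Real.log a) - max 0 (roof p - Real.log b)) ∂mu2 := by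
  have hmeas : Measurable fun u =>
      max 0 (-Real.log u - Real.log a) - max 0 (-Real.log u - Real.log b) := by
    have := Real.measurable_log
    fun_prop
  simp only [roof_eq_neg_log]
  rw [integral_measureReal_gaussMeasure_div ha hab, ← map_fst_GhatMap_mu2,
    setIntegral_map hC hmeas.aestronglyMeasurable measurable_fst_GhatMap.aemeasurable]
  simp only [← roof_eq_neg_log]
  rw [integral_roof, inv_div]
  rfl

end LimitIntegral

section ConvergentIntervalMass

lemma abs_gaussDensity_sub_le {x y : ℝ} (hx : 0 ≤ x) (hy : 0 ≤ y) :
    |gaussDensity x - gaussDensity y| ≤ |x - y| / Real.log 2 := by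
  have hdiff : gaussDensity x - gaussDensity y = (y - x) / (1 + x) / (1 + y) / Real.log 2 := by
    rw [gaussDensity, gaussDensity]
    field_simp
    ring
  rw [hdiff, abs_div, abs_of_pos log_two_pos, abs_div, abs_div,
    abs_of_pos (by positivity : 0 < 1 + x), abs_of_pos (by positivity : 0 < 1 + y), abs_sub_comm]
  gcongr
  exact (div_le_self (by positivity) (by linarith)).trans
    (div_le_self (abs_nonneg _) (by linarith))

lemma measureReal_gaussMeasure_Ioo {u v : ℝ} (hu : 0 ≤ u) (huv : u ≤ v) (hv : v ≤ 1) :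
    gaussMeasure.real (Ioo u v) = ∫ x in u..v, gaussDensity x := by
  rw [measureReal_gaussMeasure measurableSet_Ioo, setIntegral_indicator measurableSet_Ioo,
    inter_eq_right.2 (Ioo_subset_Ioo hu hv), intervalIntegral.integral_of_le huv,
    integral_Ioc_eq_integral_Ioo]

lemma abs_measureReal_gaussMeasure_Ioo_sub_le {u v w : ℝ} (hu : 0 ≤ u) (hv : v ≤ 1)
    (hw : w ∈ Icc u v) :
    |gaussMeasure.real (Ioo u v) - (v - u) * gaussDensity w| ≤ (v - u) ^ 2 / Real.log 2 := by
  have huv : u ≤ v := hw.1.trans hw.2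
  have hinteg : IntervalIntegrable gaussDensity volume u v := by
    refine (continuousOn_gaussDensity.mono ?_).intervalIntegrable
    rw [uIcc_of_le huv]
    exact Icc_subset_Icc hu hv
  have hdiff : gaussMeasure.real (Ioo u v) - (v - u) * gaussDensity w =
      ∫ x in u..v, (gaussDensity x - gaussDensity w) := by
    rw [measureReal_gaussMeasure_Ioo hu huv hv, intervalIntegral.integral_sub hinteg (by simp),
      intervalIntegral.integral_const, smul_eq_mul]
  have hbound : ∀ x ∈ uIoc u v,
      ‖gaussDensity x - gaussDensity w‖ ≤ (v - u) / Real.log 2 := by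
    intro x hx
    rw [uIoc_of_le huv] at hx
    refine (abs_gaussDensity_sub_le (hu.trans hx.1.le) (hu.trans hw.1)).trans ?_
    have := log_two_pos
    gcongr
    exact abs_sub_le_of_le_of_le hx.1.le hx.2 hw.1 hw.2
  calc |gaussMeasure.real (Ioo u v) - (v - u) * gaussDensity w|
      ≤ (v - u) / Real.log 2 * |v - u| := by
        rw [hdiff, ← Real.norm_eq_abs]
        exact intervalIntegral.norm_integral_le_of_norm_le_const hbound
    _ = _ := by
        rw [abs_of_nonneg (sub_nonneg.2 huv)]
        ring

variable {n x w : ℕ}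

lemma measurableSet_convergentInterval : MeasurableSet (convergentInterval n x w) :=
  measurableSet_Ioo

lemma preimage_one_sub_convergentInterval : (1 - ·) ⁻¹' convergentInterval n x w =
    Ioo (1 - (w : ℝ) / n) (1 - w / n + 1 / (n * (n + x))) := by
  rw [convergentInterval, preimage_const_sub_Ioo, ← sub_add]

lemma two_mul_one_div_mul_add_le (hx : 0 < x) (hxn : x < n) :
    2 * (1 / ((n : ℝ) * (n + x))) ≤ 1 / n := by
  have hn : (0 : ℝ) < n := by exact_mod_cast hx.trans hxn
  have hx' : (1 : ℝ) ≤ x := by exact_mod_cast hx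
  have hn' : (1 : ℝ) ≤ n := by exact_mod_cast hx.trans hxn
  rw [mul_one_div, div_le_div_iff₀ (by positivity) hn]
  nlinarith

lemma disjoint_convergentInterval_preimage_one_sub (hx : 0 < x) (hxn : x < n) :
    Disjoint (convergentInterval n x w) ((1 - ·) ⁻¹' convergentInterval n x w) := by
  have hn : (0 : ℝ) < n := by exact_mod_cast hx.trans hxn
  have hL := two_mul_one_div_mul_add_le hx hxn
  rw [preimage_one_sub_convergentInterval, convergentInterval, Set.disjoint_left]
  rintro y ⟨h₁, h₂⟩ ⟨h₃, h₄⟩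
  -- The two intervals could only meet if `w / n` and `1 - w / n` were less than `1 / n` apart.
  rcases Nat.lt_or_ge n (2 * w) with h | h
  · have hw : 1 + 1 / (n : ℝ) ≤ 2 * (w / n) := by
      rw [← mul_div_assoc, le_div_iff₀ hn, add_mul, one_mul, one_div_mul_cancel hn.ne']
      exact_mod_cast h
    linarith
  · have hw : 2 * ((w : ℝ) / n) ≤ 1 := by
      rw [← mul_div_assoc, div_le_one hn]
      exact_mod_cast h
    linarith

lemma abs_measureReal_convergentInterval_union_sub_le (hx : 0 < x) (hxn : x < n) (hw : 0 < w)
    (hwn : w < n) :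
    |gaussMeasure.real (convergentInterval n x w ∪ (1 - ·) ⁻¹' convergentInterval n x w) -
      1 / (n * (n + x)) * (gaussDensity (w / n) + gaussDensity (1 - w / n))| ≤
      2 / Real.log 2 / n ^ 4 := by
  have := log_two_pos
  have hn : (0 : ℝ) < n := by exact_mod_cast hw.trans hwn
  rw [measureReal_union (disjoint_convergentInterval_preimage_one_sub hx hxn)
    (measurableSet_convergentInterval.preimage (by fun_prop)),
    preimage_one_sub_convergentInterval, convergentInterval]
  have hL := two_mul_one_div_mul_add_le hx hxn
  have hL2 : (1 / ((n : ℝ) * (n + x))) ^ 2 ≤ 1 / (n : ℝ) ^ 4 := by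
    rw [div_pow, one_pow, mul_pow, (by ring : (n : ℝ) ^ 4 = n ^ 2 * n ^ 2)]
    gcongr
    linarith [x.cast_nonneg (α := ℝ)]
  have hL0 : 0 < 1 / ((n : ℝ) * (n + x)) := by positivity
  set L := 1 / ((n : ℝ) * (n + x))
  have hw₁ : 1 / (n : ℝ) ≤ w / n := by
    gcongr
    exact_mod_cast hw
  have hw₂ : (w : ℝ) / n + 1 / n ≤ 1 := by
    rw [← add_div, div_le_one hn]
    exact_mod_cast hwn
  have hleft := abs_measureReal_gaussMeasure_Ioo_sub_le (u := w / n - L) (v := w / n)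
    (w := w / n) (by linarith) (by linarith) ⟨by linarith, le_rfl⟩
  have hright := abs_measureReal_gaussMeasure_Ioo_sub_le (u := 1 - w / n)
    (v := 1 - w / n + L) (w := 1 - w / n) (by linarith) (by linarith) ⟨le_rfl, by linarith⟩
  rw [sub_sub_cancel] at hleft
  rw [add_sub_cancel_left] at hright
  calc _ ≤ L ^ 2 / Real.log 2 + L ^ 2 / Real.log 2 := by
        rw [mul_add, add_sub_add_comm]
        exact (abs_add_le _ _).trans (add_le_add hleft hright)
    _ ≤ 1 / n ^ 4 / Real.log 2 + 1 / n ^ 4 / Real.log 2 := by gcongr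
    _ = _ := by ring

end ConvergentIntervalMass

section PrescribedDenominators

/-- The irrational `α ∈ (0, 1)` whose first convergent denominator exceeding `R` is `n`, the
previous one being `x`. -/
def denominatorPairSet (R : ℝ) (n x : ℕ) : Set ℝ :=
  {α ∈ unitIrrationals | qden (pq α) (nIndex α R) = n ∧ qden (pq α) (nIndex α R - 1) = x}

/-- The irrational `α ∈ (0, 1)` whose first convergent denominator exceeding `R` is `n`, the
previous one having a ratio to `n` in `C`. -/
def denominatorRatioSet (C : Set ℝ) (R : ℝ) (n : ℕ) : Set ℝ :=
  {α ∈ unitIrrationals | qden (pq α) (nIndex α R) = n ∧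
    (qden (pq α) (nIndex α R - 1) : ℝ) / n ∈ C}

variable {C : Set ℝ} {R : ℝ} {n x : ℕ}

lemma denominatorPairSet_eq (hx : 0 < x) (hxR : (x : ℝ) ≤ R) (hRn : R < n)
    (hnx : n.Coprime x) :
    denominatorPairSet R n x = unitIrrationals ∩
      (convergentInterval n x (x : ZMod n)⁻¹.val ∪
        (1 - ·) ⁻¹' convergentInterval n x (x : ZMod n)⁻¹.val) := by
  have hn : 0 < n := by exact_mod_cast (x.cast_nonneg.trans hxR).trans_lt hRn
  have : NeZero n := ⟨hn.ne'⟩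
  have hdvd : (n : ℤ) ∣ ((x : ZMod n)⁻¹.val : ℤ) * x - 1 := by
    rw [← ZMod.intCast_zmod_eq_zero_iff_dvd]
    push_cast
    rw [ZMod.natCast_zmod_val, mul_comm, ZMod.coe_mul_inv_eq_one x hnx.symm, sub_self]
  ext α
  exact and_congr_right fun hα =>
    qden_nIndex_iff_mem_convergentInterval hα hx hxR hRn (ZMod.val_lt _) hdvd

lemma measurableSet_denominatorPairSet (hx : 0 < x) (hxR : (x : ℝ) ≤ R) (hRn : R < n)
    (hnx : n.Coprime x) : MeasurableSet (denominatorPairSet R n x) := by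
  rw [denominatorPairSet_eq hx hxR hRn hnx]
  exact measurableSet_unitIrrationals.inter (measurableSet_convergentInterval.union
    (measurableSet_convergentInterval.preimage (by fun_prop)))

lemma measureReal_unitIrrationals_inter (s : Set ℝ) :
    gaussMeasure.real (unitIrrationals ∩ s) = gaussMeasure.real s :=
  measureReal_congr (inter_ae_eq_right_of_ae_eq_univ (eventuallyEq_univ.2 ae_mem_unitIrrationals))

lemma abs_measureReal_denominatorPairSet_sub_le (hx : 0 < x) (hxR : (x : ℝ) ≤ R) (hRn : R < n)
    (hnx : n.Coprime x) :
    |gaussMeasure.real (denominatorPairSet R n x) -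
      1 / (n * (n + x)) * (gaussDensity ((x : ZMod n)⁻¹.val / n) +
        gaussDensity (1 - (x : ZMod n)⁻¹.val / n))| ≤ 2 / Real.log 2 / n ^ 4 := by
  have hxn : x < n := by exact_mod_cast hxR.trans_lt hRn
  have : Fact (1 < n) := ⟨(Nat.one_le_iff_ne_zero.2 hx.ne').trans_lt hxn⟩
  have : NeZero n := ⟨hxn.ne_bot⟩
  have hunit : IsUnit (x : ZMod n)⁻¹ :=
    .of_mul_eq_one_right _ (ZMod.coe_mul_inv_eq_one x hnx.symm)
  have hpos : 0 < (x : ZMod n)⁻¹.val :=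
    Nat.pos_of_ne_zero fun h => hunit.ne_zero ((ZMod.val_eq_zero _).1 h)
  rw [denominatorPairSet_eq hx hxR hRn hnx, measureReal_unitIrrationals_inter]
  exact abs_measureReal_convergentInterval_union_sub_le hx hxn hpos (ZMod.val_lt _)

lemma coprime_qden_succ_qden (b : ℕ → ℕ) (m : ℕ) : (qden b (m + 1)).Coprime (qden b m) := by
  rw [← Nat.isCoprime_iff_coprime]
  have hdet := pnum_mul_qden_sub b m
  rcases neg_one_pow_eq_or ℤ m with h | h <;> rw [h] at hdet
  · exact ⟨-pnum b m, pnum b (m + 1), by linarith⟩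
  · exact ⟨pnum b m, -pnum b (m + 1), by linarith⟩

open Classical in
/-- The possible denominators preceding `n` for the numbers in `denominatorRatioSet C R n`. -/
noncomputable def previousDenominators (C : Set ℝ) (R : ℝ) (n : ℕ) : Finset ℕ :=
  {x ∈ Finset.range n | n.Coprime x ∧ (x : ℝ) / n ∈ C ∩ Iic (R / n)}

lemma mem_previousDenominators : x ∈ previousDenominators C R n ↔
    x < n ∧ n.Coprime x ∧ (x : ℝ) / n ∈ C ∩ Iic (R / n) := by
  classical
  simp only [previousDenominators, Finset.mem_filter, Finset.mem_range]

lemma pos_and_le_and_coprime_of_mem_previousDenominators (hR : 1 ≤ R) (hRn : R < n)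
    (hx : x ∈ previousDenominators C R n) : 0 < x ∧ (x : ℝ) ≤ R ∧ n.Coprime x := by
  obtain ⟨-, hnx, -, hxR⟩ := mem_previousDenominators.1 hx
  have hn : 1 < n := by exact_mod_cast hR.trans_lt hRn
  refine ⟨Nat.pos_of_ne_zero ?_, ?_, hnx⟩
  · rintro rfl
    exact hn.ne' ((Nat.coprime_zero_right n).1 hnx)
  · exact (div_le_div_iff_of_pos_right (by exact_mod_cast hn.pos)).1 hxR

lemma denominatorRatioSet_eq_biUnion (hR : 1 ≤ R) (hRn : R < n) :
    denominatorRatioSet C R n = ⋃ x ∈ previousDenominators C R n, denominatorPairSet R n x := by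
  ext α
  simp only [mem_iUnion, exists_prop]
  constructor
  · rintro ⟨hα, hn, hC⟩
    obtain ⟨m, hm, hmR, -⟩ := exists_nIndex_eq_succ hα hR
    refine ⟨_, ?_, hα, hn, rfl⟩
    rw [hm, Nat.add_sub_cancel] at hC ⊢
    rw [hm] at hn
    refine mem_previousDenominators.2 ⟨?_, ?_, hC, ?_⟩
    · exact by exact_mod_cast hmR.trans_lt hRn
    · exact hn ▸ coprime_qden_succ_qden (pq α) m
    · exact div_le_div_of_nonneg_right hmR n.cast_nonneg
  · rintro ⟨x, hx, hα, hn, rfl⟩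
    exact ⟨hα, hn, (mem_previousDenominators.1 hx).2.2.1⟩

lemma measurableSet_denominatorRatioSet (hR : 1 ≤ R) (hRn : R < n) :
    MeasurableSet (denominatorRatioSet C R n) := by
  rw [denominatorRatioSet_eq_biUnion hR hRn]
  refine Finset.measurableSet_biUnion _ fun x hx => ?_
  obtain ⟨hx₀, hxR, hnx⟩ := pos_and_le_and_coprime_of_mem_previousDenominators hR hRn hx
  exact measurableSet_denominatorPairSet hx₀ hxR hRn hnx

lemma measureReal_denominatorRatioSet (hR : 1 ≤ R) (hRn : R < n) :
    gaussMeasure.real (denominatorRatioSet C R n) =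
      ∑ x ∈ previousDenominators C R n, gaussMeasure.real (denominatorPairSet R n x) := by
  rw [denominatorRatioSet_eq_biUnion hR hRn]
  refine measureReal_biUnion_finset (fun x _ y _ hxy => ?_) fun x hx => ?_
  · exact Set.disjoint_left.2 fun α hα hα' => hxy (hα.2.2.symm.trans hα'.2.2)
  · obtain ⟨hx₀, hxR, hnx⟩ := pos_and_le_and_coprime_of_mem_previousDenominators hR hRn hx
    exact measurableSet_denominatorPairSet hx₀ hxR hRn hnx

open Classical in
lemma totient_div_sq_mul_cellAverage (C : Set ℝ) (R : ℝ) (n : ℕ) :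
    (n.totient : ℝ) / n ^ 2 * cellAverage C n (R / n) =
      ∑ x ∈ previousDenominators C R n, 1 / (n * ((n : ℝ) + x)) *
        (gaussDensity ((x : ZMod n)⁻¹.val / n) + gaussDensity (1 - (x : ZMod n)⁻¹.val / n)) := by
  rcases n.eq_zero_or_pos with rfl | hn
  · simp [previousDenominators]
  have htotient : (n.totient : ℝ) ≠ 0 := by exact_mod_cast (Nat.totient_pos.2 hn).ne'
  rw [cellAverage, unitAverage, div_mul_div_comm, mul_comm ((n : ℝ) ^ 2),
    mul_div_mul_left _ _ htotient, Finset.sum_div, previousDenominators, ← Finset.filter_filter,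
    Finset.sum_filter (fun x : ℕ => (x : ℝ) / n ∈ C ∩ Iic (R / n))]
  refine Finset.sum_congr rfl fun x _ => ?_
  split_ifs with h
  · rw [indicator_of_mem h]
    field_simp
  · rw [indicator_of_notMem h, zero_mul, zero_div]

lemma card_previousDenominators_le (C : Set ℝ) (R : ℝ) (n : ℕ) :
    (previousDenominators C R n).card ≤ n := by
  classical
  exact (Finset.card_filter_le _ _).trans_eq (Finset.card_range n)

lemma abs_measureReal_denominatorRatioSet_sub_le (hR : 1 ≤ R) (hRn : R < n) :
    |gaussMeasure.real (denominatorRatioSet C R n) -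
      (n.totient : ℝ) / n ^ 2 * cellAverage C n (R / n)| ≤ 2 / Real.log 2 / n ^ 3 := by
  have := log_two_pos
  have hn : (0 : ℝ) < n := by linarith
  rw [measureReal_denominatorRatioSet hR hRn, totient_div_sq_mul_cellAverage,
    ← Finset.sum_sub_distrib]
  calc _ ≤ ∑ x ∈ previousDenominators C R n, 2 / Real.log 2 / (n : ℝ) ^ 4 := by
        refine (Finset.abs_sum_le_sum_abs _ _).trans (Finset.sum_le_sum fun x hx => ?_)
        obtain ⟨hx₀, hxR, hnx⟩ := pos_and_le_and_coprime_of_mem_previousDenominators hR hRn hx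
        exact abs_measureReal_denominatorPairSet_sub_le hx₀ hxR hRn hnx
    _ ≤ n * (2 / Real.log 2 / (n : ℝ) ^ 4) := by
        rw [Finset.sum_const, nsmul_eq_mul]
        gcongr
        exact card_previousDenominators_le C R n
    _ = _ := by field_simp

end PrescribedDenominators

section DigitCylinder

/-- The numbers whose first `N` partial quotients are prescribed by `c`. -/
def digitCylinder {N : ℕ} (c : Fin N → ℕ) : Set ℝ := {u | ∀ k : Fin N, pq u (k + 1) = c k}

variable {N : ℕ} (c : Fin N → ℕ)

lemma measurableSet_digitCylinder : MeasurableSet (digitCylinder c) := by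
  rw [digitCylinder, ofPred_forall]
  exact .iInter fun k => measurable_pq _ (measurableSet_singleton _)

lemma frontier_digitCylinder_subset : frontier (digitCylinder c) ⊆ range ((↑) : ℚ → ℝ) := by
  intro x hx
  by_contra hirr
  have hconst : ∀ᶠ z in 𝓝 x, ∀ k : Fin N, pq z (k + 1) = pq x (k + 1) :=
    eventually_all.2 fun k => eventually_pq_eq_of_irrational hirr _
  have hiff : ∀ᶠ z in 𝓝 x, z ∈ digitCylinder c ↔ x ∈ digitCylinder c := by
    filter_upwards [hconst] with z hz
    simp only [digitCylinder, mem_ofPred_eq, hz]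
  rw [frontier_eq_closure_inter_closure, mem_inter_iff, mem_closure_iff_frequently,
    mem_closure_iff_frequently] at hx
  obtain ⟨z, hz, hiffz⟩ := (hx.1.and_eventually hiff).exists
  obtain ⟨z', hz', hiffz'⟩ := (hx.2.and_eventually hiff).exists
  exact hz' (hiffz'.2 (hiffz.1 hz))

lemma volume_frontier_digitCylinder : volume (frontier (digitCylinder c)) = 0 :=
  ((countable_range _).mono (frontier_digitCylinder_subset c)).measure_zero _

lemma fst_GhatMap_mem_digitCylinder_iff (hN : 0 < N) {p : ℝ × ℝ} (hp : p ∈ Dset) :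
    (GhatMap p).1 ∈ digitCylinder c ↔
      ⌊1 / p.2⌋₊ = c ⟨0, hN⟩ ∧ ∀ i : Fin N, 1 ≤ (i : ℕ) → pq p.1 i = c i := by
  have hfloor : (⌊1 / p.2⌋ : ℝ) = (⌊1 / p.2⌋₊ : ℝ) :=
    (natCast_floor_eq_intCast_floor (one_div_nonneg.2 hp.2.2.1.1.le)).symm
  rw [GhatMap, hfloor]
  constructor
  · intro h
    refine ⟨by simpa only [pq_one_div_natCast_add_one _ hp.1] using h ⟨0, hN⟩, fun i hi => ?_⟩
    obtain ⟨j, hj⟩ := Nat.exists_eq_add_of_le' hi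
    have hdigit := h i
    rw [hj] at hdigit ⊢
    rwa [pq_one_div_natCast_add_add_two _ hp.1] at hdigit
  · rintro ⟨h₀, h⟩ ⟨_ | j, hj⟩
    · rw [← h₀]
      exact pq_one_div_natCast_add_one _ hp.1
    · rw [← h ⟨j + 1, hj⟩ (Nat.le_add_left _ _)]
      exact pq_one_div_natCast_add_add_two _ hp.1 j

lemma setIntegral_fst_GhatMap_mem_digitCylinder (hN : 0 < N) (f : ℝ × ℝ → ℝ) :
    ∫ p in {p | (GhatMap p).1 ∈ digitCylinder c}, f p ∂mu2 =
      ∫ p in {p ∈ Dset | ⌊1 / p.2⌋₊ = c ⟨0, hN⟩ ∧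
        ∀ i : Fin N, 1 ≤ (i : ℕ) → pq p.1 (i : ℕ) = c i}, f p ∂mu2 := by
  refine setIntegral_congr_set ?_
  filter_upwards [ae_mem_Dset] with p hp
  exact propext ((fst_GhatMap_mem_digitCylinder_iff c hN hp).trans (and_iff_right hp).symm)

lemma pq_nIndex_sub_eq_iff {α R : ℝ} (hα : α ∈ unitIrrationals)
    (hR : (qden (pq α) (N + 2) : ℝ) ≤ R) :
    (∀ k : Fin N, pq α (nIndex α R - k) = c k) ↔
      (qden (pq α) (nIndex α R - 1) : ℝ) / qden (pq α) (nIndex α R) ∈ digitCylinder c := by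
  have hlt : N + 2 < nIndex α R := by
    obtain ⟨m, hm, -, hmR⟩ := exists_nIndex_eq_succ hα
      (le_trans (by exact_mod_cast qden_pos (one_le_pq_succ hα) _) hR)
    rw [hm]
    refine (qden_mono (one_le_pq_succ hα)).reflect_lt ?_
    exact_mod_cast hR.trans_lt hmR
  refine forall_congr' fun k => ?_
  obtain ⟨m, hm⟩ : ∃ m, nIndex α R = m + k + 3 := ⟨nIndex α R - k - 3, by omega⟩
  have hquotient := pq_qden_div_qden (one_le_pq_succ hα) m k
  rw [hm, (by omega : m + k + 3 - k = m + 3), (by omega : m + k + 3 - 1 = m + k + 2), hquotient]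

lemma tendsto_measureReal_lt_qden (n : ℕ) :
    Tendsto (fun R : ℝ => gaussMeasure.real {α | R < qden (pq α) n}) atTop (𝓝 0) := by
  have h := tendsto_measure_iInter_atTop (μ := gaussMeasure)
    (s := fun R : ℝ => {α : ℝ | R < qden (pq α) n})
    (fun R => (measurableSet_lt measurable_const
      (measurable_from_top.comp (measurable_qden_pq n))).nullMeasurableSet)
    (fun R S hRS α hα => lt_of_le_of_lt hRS hα) ⟨0, measure_ne_top _ _⟩
  have hempty : ⋂ R : ℝ, {α : ℝ | R < qden (pq α) n} = ∅ :=
    eq_empty_of_forall_notMem fun α hα =>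
      lt_irrefl (qden (pq α) n : ℝ) (mem_iInter.1 hα (qden (pq α) n))
  rw [hempty, measure_empty] at h
  exact (ENNReal.tendsto_toReal ENNReal.zero_ne_top).comp h

end DigitCylinder

section RenewalSet

variable {N : ℕ} (c : Fin N → ℕ) {a b R : ℝ}

/-- The irrational `α ∈ (0, 1)` whose first convergent denominator exceeding `R` lies between
`a R` and `b R`, and whose digits from that index backwards are prescribed by `c`. -/
def renewalSet (c : Fin N → ℕ) (a b R : ℝ) : Set ℝ :=
  {α : ℝ | α ∈ Ioo (0 : ℝ) 1 ∧ Irrational α ∧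
    a < (qden (pq α) (nIndex α R) : ℝ) / R ∧ (qden (pq α) (nIndex α R) : ℝ) / R < b ∧
    ∀ k : Fin N, pq α (nIndex α R - (k : ℕ)) = c k}

lemma mem_Ioo_floor_ceil {n : ℕ} {u v : ℝ} (hu : 0 ≤ u) :
    n ∈ Finset.Ioo ⌊u⌋₊ ⌈v⌉₊ ↔ u < n ∧ (n : ℝ) < v := by
  rw [Finset.mem_Ioo, Nat.floor_lt hu, Nat.lt_ceil]

lemma mem_renewalSet_iff {α : ℝ} (ha : 0 ≤ a) (hR : 0 < R) (hα : α ∈ unitIrrationals)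
    (hαR : (qden (pq α) (N + 2) : ℝ) ≤ R) :
    α ∈ renewalSet c a b R ↔
      α ∈ ⋃ n ∈ Finset.Ioo ⌊a * R⌋₊ ⌈b * R⌉₊, denominatorRatioSet (digitCylinder c) R n := by
  simp only [mem_iUnion, exists_prop, mem_Ioo_floor_ceil (mul_nonneg ha hR.le)]
  constructor
  · rintro ⟨-, -, han, hnb, hdigits⟩
    exact ⟨_, ⟨(lt_div_iff₀ hR).1 han, (div_lt_iff₀ hR).1 hnb⟩, hα, rfl,
      (pq_nIndex_sub_eq_iff c hα hαR).1 hdigits⟩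
  · rintro ⟨_, ⟨han, hnb⟩, -, rfl, hratio⟩
    exact ⟨hα.1, hα.2, (lt_div_iff₀ hR).2 han, (div_lt_iff₀ hR).2 hnb,
      (pq_nIndex_sub_eq_iff c hα hαR).2 hratio⟩

lemma abs_measureReal_sub_le_of_iff_of_notMem {X : Type*} [MeasurableSpace X] {μ : Measure X}
    [IsFiniteMeasure μ] {s t u : Set X} (h : ∀ᵐ x ∂μ, x ∉ u → (x ∈ s ↔ x ∈ t)) :
    |μ.real s - μ.real t| ≤ μ.real u := by
  have hle {s t : Set X} (h : ∀ᵐ x ∂μ, x ∉ u → x ∈ s → x ∈ t) :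
      μ.real s - μ.real t ≤ μ.real u := by
    rw [sub_le_iff_le_add]
    refine le_trans (ENNReal.toReal_mono (measure_ne_top _ _) (measure_mono_ae ?_))
      (measureReal_union_le u t)
    filter_upwards [h] with x hx hxs
    exact (em (x ∈ u)).imp_right fun hxu => hx hxu hxs
  refine abs_sub_le_iff.2 ⟨hle ?_, hle ?_⟩
  · exact h.mono fun x hx hxu => (hx hxu).1
  · exact h.mono fun x hx hxu => (hx hxu).2

lemma card_Ioo_ceil_le (m : ℕ) {v : ℝ} (hv : 0 ≤ v) :
    ((Finset.Ioo m ⌈v⌉₊).card : ℝ) ≤ v := by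
  rcases (Finset.Ioo m ⌈v⌉₊).card.eq_zero_or_pos with h | h
  · rwa [h, Nat.cast_zero]
  · refine (Nat.lt_ceil.1 ?_).le
    rw [Nat.card_Ioo] at h ⊢
    omega

lemma abs_measureReal_biUnion_denominatorRatioSet_sub_le (C : Set ℝ) (ha : 1 ≤ a) (hb : 0 ≤ b)
    (hR : 1 ≤ R) :
    |gaussMeasure.real (⋃ n ∈ Finset.Ioo ⌊a * R⌋₊ ⌈b * R⌉₊, denominatorRatioSet C R n) -
      ∑ n ∈ Finset.Ioo ⌊a * R⌋₊ ⌈b * R⌉₊, (n.totient : ℝ) / n ^ 2 * cellAverage C n (R / n)| ≤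
      b * (2 / Real.log 2) / R := by
  have := log_two_pos
  have hR₀ : 0 < R := one_pos.trans_le hR
  have hlt : ∀ n ∈ Finset.Ioo ⌊a * R⌋₊ ⌈b * R⌉₊, R < n := fun n hn =>
    (le_mul_of_one_le_left hR₀.le ha).trans_lt ((mem_Ioo_floor_ceil (by positivity)).1 hn).1
  rw [measureReal_biUnion_finset
    (fun m _ n _ hmn => Set.disjoint_left.2 fun α hα hα' => hmn (hα.2.1.symm.trans hα'.2.1))
    (fun n hn => measurableSet_denominatorRatioSet hR (hlt n hn)), ← Finset.sum_sub_distrib]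
  calc _ ≤ ∑ n ∈ Finset.Ioo ⌊a * R⌋₊ ⌈b * R⌉₊, 2 / Real.log 2 / R ^ 2 := by
        refine (Finset.abs_sum_le_sum_abs _ _).trans (Finset.sum_le_sum fun n hn => ?_)
        refine (abs_measureReal_denominatorRatioSet_sub_le hR (hlt n hn)).trans ?_
        have hpow : R ^ 2 ≤ (n : ℝ) ^ 3 :=
          (pow_le_pow_right₀ hR (by norm_num)).trans (pow_le_pow_left₀ hR₀.le (hlt n hn).le 3)
        gcongr
    _ ≤ b * R * (2 / Real.log 2 / R ^ 2) := by
        rw [Finset.sum_const, nsmul_eq_mul]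
        gcongr
        exact card_Ioo_ceil_le _ (by positivity)
    _ = _ := by field_simp

lemma tendsto_measureReal_renewalSet_sub (ha : 1 < a) (hab : a < b) :
    Tendsto (fun R => gaussMeasure.real (renewalSet c a b R) -
      ∑ n ∈ Finset.Ioo ⌊a * R⌋₊ ⌈b * R⌉₊,
        (n.totient : ℝ) / n ^ 2 * cellAverage (digitCylinder c) n (R / n)) atTop (𝓝 0) := by
  have herr : Tendsto (fun R : ℝ => gaussMeasure.real {α | R < qden (pq α) (N + 2)} +
      b * (2 / Real.log 2) / R) atTop (𝓝 0) := by
    simpa only [add_zero, id] using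
      (tendsto_measureReal_lt_qden (N + 2)).add (tendsto_const_nhds.div_atTop tendsto_id)
  refine squeeze_zero_norm' ?_ herr
  filter_upwards [eventually_ge_atTop 1] with R hR
  refine (norm_sub_le_norm_sub_add_norm_sub _ (gaussMeasure.real
    (⋃ n ∈ Finset.Ioo ⌊a * R⌋₊ ⌈b * R⌉₊, denominatorRatioSet (digitCylinder c) R n)) _).trans
    (add_le_add (abs_measureReal_sub_le_of_iff_of_notMem ?_)
      (abs_measureReal_biUnion_denominatorRatioSet_sub_le _ ha.le (by linarith) hR))
  filter_upwards [ae_mem_unitIrrationals] with α hα hαR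
  exact mem_renewalSet_iff c (by linarith) (by linarith) hα (not_lt.1 hαR)

end RenewalSet

/-- For `N ≥ 1`, positive integers `c₀, …, c_{N−1}` and `E ⊆ D` the set of
`(x,y) ∈ D` with `⌊1/y⌋ = c₀` and `a_i(x) = c_i` for `1 ≤ i ≤ N−1`, the Gauss measure of
`{α : a < q_{n_R}(α)/R < b, a_{n_R−k}(α) = c_k, 0 ≤ k < N}` converges, as `R → ∞`, to
`(∫_D φ dμ₂)⁻¹ · ∫_E (max 0 (φ − ln a) − max 0 (φ − ln b)) dμ₂`. -/
theorem statement2 (N : ℕ) (hN : 0 < N) (c : Fin N → ℕ) (hc : ∀ k, 0 < c k)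
    (a b : ℝ) (ha : 1 < a) (hab : a < b) :
    Filter.Tendsto
      (fun R : ℝ =>
        (gaussMeasure {α : ℝ | α ∈ Ioo (0 : ℝ) 1 ∧ Irrational α ∧
          a < (qden (pq α) (nIndex α R) : ℝ) / R ∧
          (qden (pq α) (nIndex α R) : ℝ) / R < b ∧
          ∀ k : Fin N, pq α (nIndex α R - (k : ℕ)) = c k}).toReal)
      Filter.atTop
      (nhds ((∫ p, roof p ∂mu2)⁻¹ *
        ∫ p in {p ∈ Dset | ⌊1 / p.2⌋₊ = c ⟨0, hN⟩ ∧
            ∀ i : Fin N, 1 ≤ (i : ℕ) → pq p.1 (i : ℕ) = c i},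
          (max 0 (roof p - Real.log a) - max 0 (roof p - Real.log b)) ∂mu2)) := by
  have hsum := tendsto_sum_cellAverage (measurableSet_digitCylinder c)
    (volume_frontier_digitCylinder c) (one_pos.trans ha) hab
  rw [mul_integral_measureReal_gaussMeasure_div (measurableSet_digitCylinder c) (one_pos.trans ha)
    hab.le, setIntegral_fst_GhatMap_mem_digitCylinder c hN] at hsum
  have hlimit := (tendsto_measureReal_renewalSet_sub c ha hab).add hsum
  simp only [sub_add_cancel, zero_add] at hlimit
  exact hlimit
end

section
/- For any positive integers a_1, …, a_n and any real x ∈ [0,1), Σ_{k=1}^n ln [a_k; a_{k−1}, …, a_2, a_1 + x] = ln(q_n + x·p_n), where p_n/q_n is the n-th convergent of the finite continued fraction [a_1, …, a_n] and [a_k; a_{k−1}, …, a_2, a_1 + x] denotes the finite continued fraction a_k + 1/(a_{k−1} + ⋯ + 1/(a_2 + 1/(a_1 + x))). -/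
open MeasureTheory Filter Set Topology

/-! Write `u k` for the continuant of the first `k` entries of `b`. Dividing its recursion
`u (k + 2) = b (k + 2) * u (k + 1) + u k` by `u (k + 1)` gives the recursion of the reversed
continued fractions, so `cfRev b k = u k / u (k - 1)` and the sum of logarithms telescopes. When
the first entry is `a 1 + x`, linearity of the recursion gives `u n = q n + x * p n`. -/

/-- The continuant of the 1-indexed entries `b 1, …, b n`. It extends `qden` to an arbitrary
semiring, so that the first partial quotient can be perturbed to `a 1 + x`. -/
def continuant {R : Type*} [Semiring R] (b : ℕ → R) : ℕ → R
  | 0 => 1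
  | 1 => b 1
  | n + 2 => b (n + 2) * continuant b (n + 1) + continuant b n

theorem continuant_add_first {R : Type*} [CommSemiring R] (a : ℕ → ℕ) (x : R) (n : ℕ) :
    continuant (fun i => if i = 1 then (a 1 : R) + x else (a i : R)) n =
      qden a n + x * pnum a n := by
  induction n using Nat.twoStepInduction with
  | zero => simp [continuant, qden, pnum]
  | one => simp [continuant, qden, pnum]
  | more n ih₀ ih₁ =>
    rw [continuant, ih₀, ih₁, if_neg (by omega), qden, pnum]
    push_cast
    ring

theorem continuant_pos {R : Type*} [Semiring R] [PartialOrder R] [IsStrictOrderedRing R]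
    {b : ℕ → R} (hb₁ : 0 < b 1) (hb : ∀ k, 0 ≤ b (k + 2)) (n : ℕ) : 0 < continuant b n := by
  induction n using Nat.twoStepInduction with
  | zero => exact zero_lt_one
  | one => exact hb₁
  | more n ih₀ ih₁ => exact add_pos_of_nonneg_of_pos (mul_nonneg (hb n) ih₁.le) ih₀

theorem cfRev_one (b : ℕ → ℝ) : cfRev b 1 = b 1 := by
  simp [cfRev, cfList]

theorem cfRev_add_two (b : ℕ → ℝ) (k : ℕ) :
    cfRev b (k + 2) = b (k + 2) + 1 / cfRev b (k + 1) := by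
  simp [cfRev, cfList, List.range_succ_eq_map, Function.comp_def]

theorem cfRev_succ_eq_continuant_div (b : ℕ → ℝ) (k : ℕ) (hb : ∀ j ≤ k, continuant b j ≠ 0) :
    cfRev b (k + 1) = continuant b (k + 1) / continuant b k := by
  induction k with
  | zero => simp [cfRev_one, continuant]
  | succ k ih =>
    have hk : continuant b (k + 1) ≠ 0 := hb (k + 1) le_rfl
    calc cfRev b (k + 2)
        = b (k + 2) + continuant b k / continuant b (k + 1) := by
          rw [cfRev_add_two, ih fun j hj => hb j (by omega), one_div_div]
      _ = continuant b (k + 2) / continuant b (k + 1) := by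
          rw [continuant, add_div, mul_div_cancel_right₀ _ hk]

theorem sum_log_cfRev (b : ℕ → ℝ) (n : ℕ) (hb : ∀ j ≤ n, continuant b j ≠ 0) :
    ∑ k ∈ Finset.Icc 1 n, Real.log (cfRev b k) = Real.log (continuant b n) := by
  induction n with
  | zero => simp [continuant]
  | succ n ih =>
    have hlt : ∀ j ≤ n, continuant b j ≠ 0 := fun j hj => hb j (by omega)
    rw [Finset.sum_Icc_succ_top (by omega), ih hlt, cfRev_succ_eq_continuant_div b n hlt,
      Real.log_div (hb (n + 1) le_rfl) (hlt n le_rfl), add_sub_cancel]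

theorem statement6_general (n : ℕ) (a : ℕ → ℕ) (x : ℝ) (hx : 0 < (a 1 : ℝ) + x) :
    ∑ k ∈ Finset.Icc 1 n,
        Real.log (cfRev (fun i => if i = 1 then (a 1 : ℝ) + x else (a i : ℝ)) k) =
      Real.log ((qden a n : ℝ) + x * (pnum a n : ℝ)) := by
  rw [← continuant_add_first]
  exact sum_log_cfRev _ n fun j _ => (continuant_pos (by simpa using hx) (by simp) j).ne'

/-- For positive integers `a₁, …, aₙ` and `x ∈ [0,1)`,
`∑_{k=1}^n ln [a_k; a_{k−1}, …, a_2, a_1 + x] = ln (qₙ + x·pₙ)`. -/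
theorem statement6 (n : ℕ) (a : ℕ → ℕ) (ha : ∀ k, 1 ≤ k → k ≤ n → 0 < a k)
    (x : ℝ) (hx : x ∈ Ico (0 : ℝ) 1) :
    ∑ k ∈ Finset.Icc 1 n,
        Real.log (cfRev (fun i => if i = 1 then (a 1 : ℝ) + x else (a i : ℝ)) k) =
      Real.log ((qden a n : ℝ) + x * (pnum a n : ℝ)) := by
  rcases n.eq_zero_or_pos with rfl | hn
  · simp [qden, pnum]
  · exact statement6_general n a x (add_pos_of_pos_of_nonneg (mod_cast ha 1 le_rfl hn) hx.1)
end
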